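/- arXiv:1207.4819 — 3 statements merged into one kernel-verified Lean document; each statement's English description precedes it below -/
import Mathlib

section
/- Minimax lower bound (sparse case): There exist constants c₁, c₂ > 0 (depending only on the constant c) such that for every n ≥ 1, r ∈ {1,…,m}, ρ > 0, a > 0, setting δₙ⁽⁴⁾(r,ρ,a) := max_{l₀ ≤ l ≤ m} [ (a²·(min(r,l))·l/n) ∧ (ρ²/λ_l) ∧ ( (a²/(d·log m))·(l²/m²) ) ], for every estimator Ŝₙ (a measurable map from (V×V×ℝ)ⁿ to 𝒮_V): sup_{P ∈ 𝒫_{r,ρ,a}} P^{⊗n}{ ‖Ŝₙ − S_P‖²_{L₂(Π²)} ≥ c₁·δₙ⁽⁴⁾(r,ρ,a) } ≥ c₂. -/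
open MeasureTheory Finset
open scoped ENNReal NNReal

noncomputable section

/-- Sample space for one observation: a pair of vertices `(X, X')` and a response `Y`. -/
abbrev Obs (m : ℕ) := Fin m × Fin m × ℝ

/-- Squared Hilbert–Schmidt (Frobenius) norm of a kernel. -/
def hsNormSq {m : ℕ} (S : Matrix (Fin m) (Fin m) ℝ) : ℝ := ∑ u, ∑ v, (S u v) ^ 2

/-- Squared `L₂(Π²)` norm: `‖S‖²_{L₂(Π²)} = m⁻² ‖S‖₂²`. -/
def l2PiSq {m : ℕ} (S : Matrix (Fin m) (Fin m) ℝ) : ℝ := hsNormSq S / (m : ℝ) ^ 2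

/-- Squared Sobolev (Hilbert–Schmidt) norm `‖W^{1/2}S‖₂² = ∑ₖ λₖ ‖S φₖ‖²`,
expressed through the eigendata `(lam, φ)` of `W` (indexed by `1,…,m`). -/
def sobolevHSSq {m : ℕ} (lam : ℕ → ℝ) (φ : ℕ → Fin m → ℝ)
    (S : Matrix (Fin m) (Fin m) ℝ) : ℝ :=
  ∑ k ∈ Finset.Icc 1 m, lam k * ∑ u, (S.mulVec (φ k) u) ^ 2

/-- `φ₁,…,φ_m` are orthonormal in `ℝ^V` (Euclidean inner product). -/
def OrthonormalFamily (m : ℕ) (φ : ℕ → Fin m → ℝ) : Prop :=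
  ∀ j ∈ Finset.Icc 1 m, ∀ k ∈ Finset.Icc 1 m,
    (∑ v, φ j v * φ k v) = if j = k then (1 : ℝ) else 0

/-- Eigendata of the positive semidefinite kernel `W`: orthonormal eigenfunctions `φ`,
nonnegative nondecreasing eigenvalues `lam` (indexed by `1,…,m`), `k0` the smallest index
of a positive eigenvalue, and `λ_{k+1} ≤ c·λ_k` for `k ≥ k0`. -/
structure IsEigenData (m : ℕ) (c : ℝ) (lam : ℕ → ℝ) (φ : ℕ → Fin m → ℝ) (k0 : ℕ) : Prop where
  orth : OrthonormalFamily m φ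
  nonneg : ∀ k ∈ Finset.Icc 1 m, 0 ≤ lam k
  mono : ∀ k l : ℕ, 1 ≤ k → k ≤ l → l ≤ m → lam k ≤ lam l
  k0_mem : 1 ≤ k0 ∧ k0 ≤ m ∧ 0 < lam k0
  k0_min : ∀ k ∈ Finset.Icc 1 m, 0 < lam k → k0 ≤ k
  ratio : ∀ k : ℕ, k0 ≤ k → k + 1 ≤ m → lam (k + 1) ≤ c * lam k

/-- The design `(X, X')` is uniformly distributed on `V × V`. -/
def UniformDesign (m : ℕ) (P : Measure (Obs m)) : Prop :=
  ∀ u v : Fin m, P {z : Obs m | z.1 = u ∧ z.2.1 = v} = ((m : ℝ≥0∞) ^ 2)⁻¹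

/-- The regression kernel `S_P(u,v) = m²·E_P[Y·1{X=u, X'=v}] = E_P(Y | X=u, X'=v)`. -/
def regKernel (m : ℕ) (P : Measure (Obs m)) : Matrix (Fin m) (Fin m) ℝ :=
  Matrix.of fun u v =>
    (m : ℝ) ^ 2 * ∫ z : Obs m, (if z.1 = u ∧ z.2.1 = v then z.2.2 else 0) ∂P

/-- Membership in the class `𝒫_{r,ρ,a}` of sampling distributions. -/
def MemP (m : ℕ) (r : ℕ) (ρ a : ℝ) (lam : ℕ → ℝ) (φ : ℕ → Fin m → ℝ)
    (P : Measure (Obs m)) : Prop :=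
  IsProbabilityMeasure P ∧ UniformDesign m P ∧ (∀ᵐ z ∂P, |z.2.2| ≤ a) ∧
    (regKernel m P).IsSymm ∧ (regKernel m P).rank ≤ r ∧
    sobolevHSSq lam φ (regKernel m P) ≤ ρ ^ 2 * (m : ℝ) ^ 2


/-- The sparsity parameter `d := max_{v∈V} card{j : φ_j(v) ≠ 0}`. -/
def sparsity (m : ℕ) (φ : ℕ → Fin m → ℝ) : ℕ :=
  Finset.univ.sup fun v : Fin m => ((Finset.Icc 1 m).filter fun j => φ j v ≠ 0).card

/-- The quantity `δₙ⁽⁴⁾(r,ρ,a)` (with value in `ℝ≥0∞`, so that `ρ²/λ_l = ∞` when `λ_l = 0`). -/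
def delta4 (m n r l0 d : ℕ) (ρ a : ℝ) (lam : ℕ → ℝ) : ℝ≥0∞ :=
  ⨆ l ∈ Finset.Icc l0 m,
    min (ENNReal.ofReal (a ^ 2 * (min r l : ℝ) * (l : ℝ) / n))
      (min (ENNReal.ofReal (ρ ^ 2) / ENNReal.ofReal (lam l))
        (ENNReal.ofReal
          ((a ^ 2 / (d * Real.log m)) * ((l : ℝ) ^ 2 / (m : ℝ) ^ 2))))

/-!
Fix a level `l` at which the rate `δ` is attained. The kernels `U M_σ Uᵀ`, where the columns of `U`
are among the first `l` eigenfunctions and `M_σ` is a matrix with entries `0` or `±κ` read off a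
sign pattern `σ`, have Sobolev norm at most `√λ_l` times the Frobenius norm of `M_σ`, which is of
order `κ l`; the choice `256 κ² l² = δ m²` balances this against the rate. Each kernel is the
regression function of a law with responses `±a`, provided its entries are at most `a / 2`. Since
the rows of `U` are `d`-sparse and have norm at most one, Hoeffding's inequality and a union bound
over the `m²` entries bound the squared entries by `64 κ² d log m ≤ a² / 4` for all but at most one
pattern in `64`.

Flipping one sign changes the law of the sample by a bounded amount in Hellinger affinity, so
Assouad's lemma gives an estimation error of order `κ² l²` with constant probability on average over
the hypercube; the exceptional patterns are too few to spoil the average. Three choices of `M_σ` are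
needed: a single sign when `l = 1`, the matrix `κ x xᵀ` of a sign vector `x` when `r = 1`, and a
symmetric pair of off-diagonal sign blocks with repeated columns when `r ≥ 2`.
-/

/-! ### Hoeffding's inequality for random signs -/

section Signs

variable {ι κ : Type*} [Fintype ι] [Fintype κ]

/-- The sign `±1 : ℝ` encoded by a Boolean; hypercubes `{-1, 1}^ι` are represented by
`ι → Bool`, so that Mathlib's `hammingDist` applies to them. -/
def boolSign (b : Bool) : ℝ := if b then 1 else -1

@[simp] lemma boolSign_true : boolSign true = 1 := rfl

@[simp] lemma boolSign_false : boolSign false = -1 := rfl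

lemma boolSign_mul_self (b : Bool) : boolSign b * boolSign b = 1 := by cases b <;> simp

lemma abs_boolSign (b : Bool) : |boolSign b| = 1 := by cases b <;> simp

lemma sq_boolSign_sub (b c : Bool) :
    (boolSign b - boolSign c) ^ 2 = 4 * if b ≠ c then 1 else 0 := by
  cases b <;> cases c <;> norm_num

lemma hammingDist_eq_sum (σ τ : ι → Bool) :
    (hammingDist σ τ : ℝ) = ∑ i, if σ i ≠ τ i then 1 else 0 := by
  rw [sum_boole, hammingDist]

lemma sum_sq_boolSign_sub (σ τ : ι → Bool) :
    ∑ i, (boolSign (σ i) - boolSign (τ i)) ^ 2 = 4 * hammingDist σ τ := by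
  simp_rw [hammingDist_eq_sum, sq_boolSign_sub, mul_sum]

lemma sum_exp_sum_boolSign_mul_le [DecidableEq ι] (c : ι → ℝ) :
    ∑ σ : ι → Bool, Real.exp (∑ i, boolSign (σ i) * c i) ≤
      2 ^ Fintype.card ι * Real.exp ((∑ i, c i ^ 2) / 2) := by
  have exp_add_exp_neg_le (x : ℝ) : Real.exp x + Real.exp (-x) ≤ 2 * Real.exp (x ^ 2 / 2) := by
    linarith [Real.cosh_eq x ▸ Real.cosh_le_exp_half_sq x]
  calc ∑ σ : ι → Bool, Real.exp (∑ i, boolSign (σ i) * c i)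
      = ∏ i, ∑ b, Real.exp (boolSign b * c i) := by
        simp_rw [Real.exp_sum, prod_univ_sum, Fintype.piFinset_univ]
    _ ≤ ∏ i, 2 * Real.exp (c i ^ 2 / 2) := by
        gcongr with i
        simpa using exp_add_exp_neg_le (c i)
    _ = 2 ^ Fintype.card ι * Real.exp ((∑ i, c i ^ 2) / 2) := by
        rw [prod_mul_distrib, prod_const, card_univ, ← Real.exp_sum, sum_div]

lemma one_le_exp_neg_mul_exp_add_exp {x v t : ℝ} (hv : 0 < v) (ht : 0 ≤ t) (h : t ≤ x ^ 2) :
    1 ≤ Real.exp (-(t / v)) * (Real.exp (√t / v * x) + Real.exp (-(√t / v) * x)) := by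
  have sqrt_le : √t ≤ |x| := Real.sqrt_le_iff.2 ⟨abs_nonneg _, by rwa [sq_abs]⟩
  have hs : 0 ≤ √t / v := by positivity
  calc 1 = Real.exp (-(t / v)) * Real.exp (t / v) := by rw [← Real.exp_add]; simp
    _ = Real.exp (-(t / v)) * Real.exp (√t / v * √t) := by
        rw [div_mul_eq_mul_div, Real.mul_self_sqrt ht]
    _ ≤ Real.exp (-(t / v)) * Real.exp |√t / v * x| := by
        rw [abs_mul, abs_of_nonneg hs]
        gcongr
    _ ≤ _ := by
        rw [neg_mul]
        gcongr
        exact Real.exp_abs_le _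

lemma card_lt_sq_sum_boolSign_mul_le [DecidableEq ι] (c : ι → ℝ) {v t : ℝ} (hv : 0 < v)
    (ht : 0 ≤ t) (hc : ∑ i, c i ^ 2 ≤ v) :
    (#{σ : ι → Bool | t < (∑ i, boolSign (σ i) * c i) ^ 2} : ℝ) ≤
      2 * Real.exp (-(t / (2 * v))) * 2 ^ Fintype.card ι := by
  set x : (ι → Bool) → ℝ := fun σ => ∑ i, boolSign (σ i) * c i
  set s : ℝ := √t / v
  have hsv : s ^ 2 * v = t / v := by
    rw [div_pow, Real.sq_sqrt ht]
    field_simp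
  have exp_moment_le (ε : ℝ) (hε : ε ^ 2 = s ^ 2) :
      ∑ σ, Real.exp (ε * x σ) ≤ 2 ^ Fintype.card ι * Real.exp (t / (2 * v)) := by
    have key := sum_exp_sum_boolSign_mul_le fun i => ε * c i
    simp_rw [mul_left_comm _ ε, ← mul_sum, mul_pow, hε, ← mul_sum] at key
    refine key.trans ?_
    rw [mul_comm 2 v, ← div_div, ← hsv]
    gcongr
  calc (#{σ | t < x σ ^ 2} : ℝ)
      ≤ ∑ σ, Real.exp (-(t / v)) * (Real.exp (s * x σ) + Real.exp (-s * x σ)) := by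
        rw [← sum_boole]
        refine sum_le_sum fun σ _ => ?_
        split_ifs with hσ
        exacts [one_le_exp_neg_mul_exp_add_exp hv ht hσ.le, by positivity]
    _ ≤ Real.exp (-(t / v)) * (2 ^ Fintype.card ι * Real.exp (t / (2 * v))
          + 2 ^ Fintype.card ι * Real.exp (t / (2 * v))) := by
        rw [← mul_sum, sum_add_distrib]
        gcongr
        exacts [exp_moment_le s rfl, exp_moment_le (-s) (neg_sq s)]
    _ = 2 * Real.exp (-(t / v) + t / (2 * v)) * 2 ^ Fintype.card ι := by
        rw [Real.exp_add]
        ring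
    _ = 2 * Real.exp (-(t / (2 * v))) * 2 ^ Fintype.card ι := by
        congr 3
        field_simp
        norm_num

lemma card_exists_lt_sq_sum_boolSign_mul_le [DecidableEq ι] (c : κ → ι → ℝ) {v : ℝ} {m : ℕ}
    (hm : 2 ≤ Real.log m) (hκ : Fintype.card κ ≤ m ^ 2) (hv : 0 < v)
    (hc : ∀ k, ∑ i, c k i ^ 2 ≤ v) :
    64 * #{σ : ι → Bool | ∃ k, 16 * v * Real.log m < (∑ i, boolSign (σ i) * c k i) ^ 2} ≤
      2 ^ Fintype.card ι := by
  classical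
  have hm0 : (0 : ℝ) < m := Nat.cast_pos.2 <| Nat.pos_of_ne_zero fun h => by norm_num [h] at hm
  have exp_two : (128 : ℝ) ≤ Real.exp 2 ^ 6 := by
    have := Real.add_one_le_exp 2
    calc (128 : ℝ) ≤ 3 ^ 6 := by norm_num
      _ ≤ Real.exp 2 ^ 6 := by gcongr; linarith
  have hm6 : (128 : ℝ) ≤ m ^ 6 := exp_two.trans <| by
    gcongr
    exact (Real.le_log_iff_exp_le hm0).1 hm
  have exp_eq : Real.exp (-(16 * v * Real.log m / (2 * v))) = ((m : ℝ) ^ 8)⁻¹ := by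
    rw [Real.exp_neg, ← Real.exp_log hm0, ← Real.exp_nat_mul, Real.log_exp]
    congr 2
    field_simp
    norm_num
  have union_bound :
      (#{σ : ι → Bool | ∃ k, 16 * v * Real.log m < (∑ i, boolSign (σ i) * c k i) ^ 2} : ℝ) ≤
        ∑ _k : κ, 2 * ((m : ℝ) ^ 8)⁻¹ * 2 ^ Fintype.card ι := by
    have subset_biUnion :
        ({σ : ι → Bool | ∃ k, 16 * v * Real.log m < (∑ i, boolSign (σ i) * c k i) ^ 2} : Finset _) ⊆
          univ.biUnion fun k => {σ | 16 * v * Real.log m < (∑ i, boolSign (σ i) * c k i) ^ 2} :=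
      fun σ hσ => by simpa using hσ
    rw [← exp_eq]
    refine (Nat.cast_le.2 ((card_le_card subset_biUnion).trans card_biUnion_le)).trans ?_
    rw [Nat.cast_sum]
    exact sum_le_sum fun k _ =>
      card_lt_sq_sum_boolSign_mul_le (c k) hv (by positivity) (hc k)
  rw [← Nat.cast_le (α := ℝ)]
  push_cast
  calc _ ≤ 64 * ∑ _k : κ, 2 * ((m : ℝ) ^ 8)⁻¹ * 2 ^ Fintype.card ι := by gcongr
    _ = Fintype.card κ * (128 * ((m : ℝ) ^ 8)⁻¹) * 2 ^ Fintype.card ι := by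
        rw [sum_const, card_univ, nsmul_eq_mul]
        ring
    _ ≤ (m : ℝ) ^ 2 * (m ^ 6 * ((m : ℝ) ^ 8)⁻¹) * 2 ^ Fintype.card ι := by
        gcongr
        exact_mod_cast hκ
    _ = 2 ^ Fintype.card ι := by field_simp

lemma exists_forall_sq_sum_boolSign_mul_le (c : κ → ι → ℝ) {v : ℝ} {m : ℕ}
    (hm : 2 ≤ Real.log m) (hκ : Fintype.card κ ≤ m ^ 2) (hv : 0 < v)
    (hc : ∀ k, ∑ i, c k i ^ 2 ≤ v) :
    ∃ σ : ι → Bool, ∀ k, (∑ i, boolSign (σ i) * c k i) ^ 2 ≤ 16 * v * Real.log m := by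
  classical
  by_contra! h
  have card_le := card_exists_lt_sq_sum_boolSign_mul_le c hm hκ hv hc
  rw [filter_true_of_mem fun σ _ => h σ, card_univ, Fintype.card_fun, Fintype.card_bool]
    at card_le
  have := Nat.two_pow_pos (Fintype.card ι)
  omega

end Signs

/-! ### Bhattacharyya affinity -/

section Affinity

variable {Z : Type*} [Fintype Z]

/-- The Bhattacharyya coefficient (Hellinger affinity) `∑ √(p q)` of two weight functions. It is
used because, unlike the total variation distance, it is multiplicative over product laws. -/
def bhattacharyya (p q : Z → ℝ) : ℝ := ∑ z, √(p z * q z)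

lemma bhattacharyya_nonneg (p q : Z → ℝ) : 0 ≤ bhattacharyya p q :=
  sum_nonneg fun _ _ => Real.sqrt_nonneg _

lemma bhattacharyya_prod_eq_pow {p q : Z → ℝ} (hp : ∀ z, 0 ≤ p z) (hq : ∀ z, 0 ≤ q z) (n : ℕ) :
    bhattacharyya (fun x : Fin n → Z => ∏ k, p (x k)) (fun x => ∏ k, q (x k)) =
      bhattacharyya p q ^ n := by
  simp_rw [bhattacharyya, Fintype.sum_pow, ← prod_mul_distrib]
  exact sum_congr rfl fun x _ => Real.sqrt_prod _ fun k _ => mul_nonneg (hp _) (hq _)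

lemma sq_bhattacharyya_le {p q : Z → ℝ} (hp : ∀ z, 0 ≤ p z) (hq : ∀ z, 0 ≤ q z) :
    bhattacharyya p q ^ 2 ≤ (∑ z, min (p z) (q z)) * ∑ z, (p z + q z) := by
  have hmin (z) : 0 ≤ min (p z) (q z) := le_min (hp z) (hq z)
  have hmax (z) : 0 ≤ max (p z) (q z) := le_max_of_le_left (hp z)
  calc bhattacharyya p q ^ 2
      = (∑ z, √(min (p z) (q z)) * √(max (p z) (q z))) ^ 2 := by
        simp_rw [← Real.sqrt_mul (hmin _), min_mul_max, bhattacharyya]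
    _ ≤ (∑ z, √(min (p z) (q z)) ^ 2) * ∑ z, √(max (p z) (q z)) ^ 2 :=
        sum_mul_sq_le_sq_mul_sq _ _ _
    _ = (∑ z, min (p z) (q z)) * ∑ z, max (p z) (q z) := by
        simp_rw [Real.sq_sqrt (hmin _), Real.sq_sqrt (hmax _)]
    _ ≤ (∑ z, min (p z) (q z)) * ∑ z, (p z + q z) := by
        gcongr with z
        · exact sum_nonneg fun z _ => hmin z
        · exact max_le_add_of_nonneg (hp z) (hq z)

lemma one_eighth_le_sum_min_prod {p q : Z → ℝ} (hp : ∀ z, 0 ≤ p z) (hq : ∀ z, 0 ≤ q z)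
    (hp_sum : ∑ z, p z = 1) (hq_sum : ∑ z, q z = 1) {n : ℕ}
    (h : n * (1 - bhattacharyya p q) ≤ 1 / 2) :
    1 / 8 ≤ ∑ x : Fin n → Z, min (∏ k, p (x k)) (∏ k, q (x k)) := by
  have bernoulli : 1 / 2 ≤ bhattacharyya p q ^ n := by
    have := one_add_mul_sub_le_pow (show -1 ≤ bhattacharyya p q by
      linarith [bhattacharyya_nonneg p q]) n
    linarith
  have le_sum_min := sq_bhattacharyya_le (p := fun x : Fin n → Z => ∏ k, p (x k))
    (q := fun x => ∏ k, q (x k)) (fun x => prod_nonneg fun k _ => hp (x k))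
    fun x => prod_nonneg fun k _ => hq (x k)
  rw [bhattacharyya_prod_eq_pow hp hq, sum_add_distrib, ← Fintype.sum_pow, ← Fintype.sum_pow,
    hp_sum, hq_sum, one_pow] at le_sum_min
  nlinarith

end Affinity

/-! ### Assouad's lemma -/

section Assouad

variable {ι X : Type*} [Fintype ι] [DecidableEq ι] [Fintype X]

lemma hammingDist_update_not (σ : ι → Bool) (i : ι) :
    hammingDist σ (Function.update σ i (!σ i)) = 1 := by
  rw [hammingDist, card_eq_one]
  refine ⟨i, ?_⟩
  ext j
  rcases eq_or_ne j i with rfl | hji <;> simp [*]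

lemma sum_comp_update_not (f : (ι → Bool) → ℝ) (i : ι) :
    ∑ σ, f (Function.update σ i (!σ i)) = ∑ σ, f σ := by
  have involutive : Function.Involutive fun σ : ι → Bool => Function.update σ i (!σ i) :=
    fun σ => by simp
  exact involutive.bijective.sum_comp f

/- For each coordinate the hypercube splits into pairs of neighbours, and an estimate of that
coordinate errs at one end of every pair. -/
lemma le_sum_mul_hammingDist {p : (ι → Bool) → X → ℝ} {η : ℝ}
    (h_min : ∀ σ τ, hammingDist σ τ = 1 → η ≤ ∑ x, min (p σ x) (p τ x)) (est : X → ι → Bool) :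
    Fintype.card ι * (2 ^ Fintype.card ι * η / 2) ≤
      ∑ σ, ∑ x, p σ x * hammingDist (est x) σ := by
  let err (i : ι) (σ : ι → Bool) : ℝ := ∑ x, p σ x * if est x i ≠ σ i then 1 else 0
  have le_err_add (i σ) : η ≤ err i σ + err i (Function.update σ i (!σ i)) := by
    refine (h_min _ _ (hammingDist_update_not σ i)).trans ?_
    rw [← sum_add_distrib]
    refine sum_le_sum fun x _ => ?_
    rw [Function.update_self]
    cases est x i <;> cases σ i <;> simp
  have le_sum_err (i) : 2 ^ Fintype.card ι * η / 2 ≤ ∑ σ, err i σ := by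
    have := sum_le_sum fun σ (_ : σ ∈ univ) => le_err_add i σ
    rw [sum_add_distrib, sum_comp_update_not (err i), sum_const, card_univ, nsmul_eq_mul,
      Fintype.card_fun, Fintype.card_bool] at this
    push_cast at this
    linarith
  calc Fintype.card ι * (2 ^ Fintype.card ι * η / 2)
      = ∑ _i : ι, 2 ^ Fintype.card ι * η / 2 := by rw [sum_const, card_univ, nsmul_eq_mul]
    _ ≤ ∑ i, ∑ σ, err i σ := sum_le_sum fun i _ => le_sum_err i
    _ = ∑ σ, ∑ x, p σ x * hammingDist (est x) σ := by
        rw [sum_comm]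
        refine sum_congr rfl fun σ _ => ?_
        rw [sum_comm]
        simp_rw [hammingDist_eq_sum, mul_sum]

lemma assouad [Nonempty ι] {p : (ι → Bool) → X → ℝ} (hp : ∀ σ x, 0 ≤ p σ x)
    (hp_sum : ∀ σ, ∑ x, p σ x = 1) {η : ℝ} (hη : 0 ≤ η)
    (h_min : ∀ σ τ, hammingDist σ τ = 1 → η ≤ ∑ x, min (p σ x) (p τ x)) (est : X → ι → Bool) :
    2 ^ Fintype.card ι * η / 4 ≤
      ∑ σ, ∑ x with Fintype.card ι * η / 4 ≤ hammingDist (est x) σ, p σ x := by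
  set N : ℝ := (Fintype.card ι : ℝ)
  have hN : 0 < N := Nat.cast_pos.2 Fintype.card_pos
  have truncate (σ) : ∑ x, p σ x * hammingDist (est x) σ ≤
      N * (∑ x with N * η / 4 ≤ hammingDist (est x) σ, p σ x) + N * η / 4 := by
    have hterm (x) : p σ x * hammingDist (est x) σ ≤
        N * (if N * η / 4 ≤ hammingDist (est x) σ then p σ x else 0) + N * η / 4 * p σ x := by
      have dist_le : (hammingDist (est x) σ : ℝ) ≤ N :=
        Nat.cast_le.2 hammingDist_le_card_fintype
      have := hp σ x
      split_ifs with h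
      · have : 0 ≤ N * η / 4 * p σ x := by positivity
        nlinarith
      · nlinarith
    refine (sum_le_sum fun x _ => hterm x).trans_eq ?_
    rw [sum_add_distrib, ← mul_sum, ← mul_sum, hp_sum, mul_one, sum_filter]
  have key := (le_sum_mul_hammingDist h_min est).trans (sum_le_sum fun σ _ => truncate σ)
  rw [sum_add_distrib, ← mul_sum, sum_const, card_univ, Fintype.card_fun, Fintype.card_bool,
    nsmul_eq_mul] at key
  push_cast at key
  refine le_of_mul_le_mul_left ?_ hN
  linarith

lemma exists_notMem_le_of_card_add_lt_sum {α : Type*} [Fintype α] {T : α → ℝ} {bad : Finset α}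
    {ε : ℝ} (hε : 0 ≤ ε) (hT : ∀ x, T x ≤ 1) (h : #bad + Fintype.card α * ε < ∑ x, T x) :
    ∃ x ∉ bad, ε ≤ T x := by
  classical
  by_contra! h_lt
  refine h.not_ge ?_
  calc ∑ x, T x ≤ ∑ x, ((if x ∈ bad then 1 else 0) + ε) := by
        refine sum_le_sum fun x _ => ?_
        split_ifs with hx
        · linarith [hT x]
        · linarith [h_lt x hx]
    _ = #bad + Fintype.card α * ε := by
        rw [sum_add_distrib, sum_boole, filter_univ_mem, sum_const, card_univ, nsmul_eq_mul]

end Assouad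

/-! ### Finitely supported laws -/

section DiscreteMeasure

variable {Z : Type*} [Fintype Z] [MeasurableSpace Z]

/-- The measure on a finite type with weights `w`; negative weights are truncated to `0`. -/
def discreteMeasure (w : Z → ℝ) : Measure Z := ∑ z, ENNReal.ofReal (w z) • Measure.dirac z

variable [MeasurableSingletonClass Z] {w : Z → ℝ}

lemma discreteMeasure_singleton (w : Z → ℝ) (z : Z) :
    discreteMeasure w {z} = ENNReal.ofReal (w z) := by
  rw [discreteMeasure, Measure.finsetSum_apply, sum_eq_single z]
  · simp
  · intro y _ hyz
    simp [hyz]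
  · simp

lemma discreteMeasure_coe (w : Z → ℝ) (s : Finset Z) :
    discreteMeasure w s = ∑ z ∈ s, ENNReal.ofReal (w z) := by
  simp_rw [← sum_measure_singleton, discreteMeasure_singleton]

lemma isProbabilityMeasure_discreteMeasure (hw : ∀ z, 0 ≤ w z) (hw_sum : ∑ z, w z = 1) :
    IsProbabilityMeasure (discreteMeasure w) := by
  constructor
  rw [← coe_univ, discreteMeasure_coe, ← ENNReal.ofReal_sum_of_nonneg fun z _ => hw z, hw_sum,
    ENNReal.ofReal_one]

lemma ofReal_sum_prod_le_pi_map_discreteMeasure {Y : Type*} [MeasurableSpace Y]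
    (hw : ∀ z, 0 ≤ w z) (hw_sum : ∑ z, w z = 1) (g : Z → Y) {n : ℕ} (A : Set (Fin n → Y))
    [DecidablePred (· ∈ A)] :
    ENNReal.ofReal (∑ x : Fin n → Z with g ∘ x ∈ A, ∏ k, w (x k)) ≤
      Measure.pi (fun _ : Fin n => (discreteMeasure w).map g) A := by
  have := isProbabilityMeasure_discreteMeasure hw hw_sum
  have hg : AEMeasurable g (discreteMeasure w) := (measurable_of_countable g).aemeasurable
  have := Measure.isProbabilityMeasure_map hg
  rw [← Measure.pi_map_pi fun _ : Fin n => hg]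
  refine le_trans (le_of_eq ?_) (Measure.le_map_apply (measurable_of_countable _).aemeasurable A)
  have preimage_eq : (fun (x : Fin n → Z) k => g (x k)) ⁻¹' A =
      (({x : Fin n → Z | g ∘ x ∈ A} : Finset _) : Set (Fin n → Z)) := by
    ext x
    simp [Function.comp_def]
  rw [preimage_eq, ← sum_measure_singleton,
    ENNReal.ofReal_sum_of_nonneg fun x _ => prod_nonneg fun k _ => hw (x k)]
  refine sum_congr rfl fun x _ => ?_
  simp_rw [Measure.pi_singleton, discreteMeasure_singleton,
    ENNReal.ofReal_prod_of_nonneg fun k _ => hw (x k)]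

end DiscreteMeasure

/-! ### Regression with two-point responses -/

section TwoPoint

variable {m : ℕ} {a : ℝ} {s s' : Matrix (Fin m) (Fin m) ℝ}

/-- The probability of the cell `(u, v)` and response `±a` when the design is uniform, the
response has mean `s u v`, and its sign is encoded by a Boolean. -/
def twoPointWeight (a : ℝ) (s : Matrix (Fin m) (Fin m) ℝ) (z : Fin m × Fin m × Bool) : ℝ :=
  (1 + boolSign z.2.2 * s z.1 z.2.1 / a) / (2 * (m : ℝ) ^ 2)

/-- The observation encoded by a cell and the sign of the response. -/
def twoPointObs (a : ℝ) (z : Fin m × Fin m × Bool) : Obs m := (z.1, z.2.1, boolSign z.2.2 * a)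

/-- The law of an observation with uniform design and response `±a` with regression kernel `s`.
It is a probability measure as soon as the entries of `s` are bounded by `a`. -/
def twoPointLaw (a : ℝ) (s : Matrix (Fin m) (Fin m) ℝ) : Measure (Obs m) :=
  (discreteMeasure (twoPointWeight a s)).map (twoPointObs a)

lemma twoPointWeight_true_add_false (a : ℝ) (s : Matrix (Fin m) (Fin m) ℝ) (u v : Fin m) :
    twoPointWeight a s (u, v, true) + twoPointWeight a s (u, v, false) = ((m : ℝ) ^ 2)⁻¹ := by
  simp only [twoPointWeight, boolSign_true, boolSign_false]
  ring

lemma sum_twoPointWeight [NeZero m] (a : ℝ) (s : Matrix (Fin m) (Fin m) ℝ) :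
    ∑ z, twoPointWeight a s z = 1 := by
  have hm : (m : ℝ) ≠ 0 := NeZero.ne _
  simp_rw [Fintype.sum_prod_type, Fintype.sum_bool, twoPointWeight_true_add_false, sum_const,
    card_univ, Fintype.card_fin, nsmul_eq_mul]
  field_simp

lemma le_twoPointWeight (ha : 0 < a) (hs : ∀ u v, |s u v| ≤ a / 2) (z : Fin m × Fin m × Bool) :
    1 / (4 * (m : ℝ) ^ 2) ≤ twoPointWeight a s z := by
  obtain ⟨u, v, b⟩ := z
  have neg_half_le : -(1 / 2) ≤ boolSign b * s u v / a := by
    rw [le_div_iff₀ ha]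
    have := abs_le.1 (hs u v)
    cases b <;> simp <;> linarith
  calc 1 / (4 * (m : ℝ) ^ 2) = (1 - 1 / 2) / (2 * (m : ℝ) ^ 2) := by ring
    _ ≤ twoPointWeight a s (u, v, b) := by
        rw [twoPointWeight]
        gcongr
        linarith

lemma twoPointWeight_nonneg (ha : 0 < a) (hs : ∀ u v, |s u v| ≤ a / 2)
    (z : Fin m × Fin m × Bool) : 0 ≤ twoPointWeight a s z :=
  le_trans (by positivity) (le_twoPointWeight ha hs z)

lemma half_add_sub_sqrt_mul_le {x y b : ℝ} (hb : 0 < b) (hx : b ≤ x) (hy : b ≤ y) :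
    (x + y) / 2 - √(x * y) ≤ (x - y) ^ 2 / (8 * b) := by
  have hx0 := Real.sq_sqrt (hb.le.trans hx)
  have hy0 := Real.sq_sqrt (hb.le.trans hy)
  have sqrt_le_x := Real.sqrt_le_sqrt hx
  have sqrt_le_y := Real.sqrt_le_sqrt hy
  rw [Real.sqrt_mul (hb.le.trans hx)]
  set p := √x
  set q := √y
  have four_mul_le : 4 * b ≤ (p + q) ^ 2 := by
    calc 4 * b = (√b + √b) ^ 2 := by linear_combination -4 * Real.sq_sqrt hb.le
      _ ≤ (p + q) ^ 2 := by gcongr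
  rw [← hx0, ← hy0, le_div_iff₀ (by positivity)]
  calc ((p ^ 2 + q ^ 2) / 2 - p * q) * (8 * b) = (p - q) ^ 2 * (4 * b) := by ring
    _ ≤ (p - q) ^ 2 * (p + q) ^ 2 := by gcongr
    _ = (p ^ 2 - q ^ 2) ^ 2 := by ring

lemma one_sub_bhattacharyya_twoPointWeight_le [NeZero m] (ha : 0 < a)
    (hs : ∀ u v, |s u v| ≤ a / 2) (hs' : ∀ u v, |s' u v| ≤ a / 2) :
    1 - bhattacharyya (twoPointWeight a s) (twoPointWeight a s') ≤
      hsNormSq (s - s') / (4 * a ^ 2 * (m : ℝ) ^ 2) := by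
  have hm : (m : ℝ) ≠ 0 := NeZero.ne _
  set w := twoPointWeight a s
  set w' := twoPointWeight a s'
  calc 1 - bhattacharyya w w' = ∑ z, ((w z + w' z) / 2 - √(w z * w' z)) := by
        rw [sum_sub_distrib, ← sum_div, sum_add_distrib, sum_twoPointWeight, sum_twoPointWeight,
          bhattacharyya]
        norm_num
    _ ≤ ∑ z, (w z - w' z) ^ 2 / (8 * (1 / (4 * (m : ℝ) ^ 2))) :=
        sum_le_sum fun z _ => half_add_sub_sqrt_mul_le (by positivity)
          (le_twoPointWeight ha hs z) (le_twoPointWeight ha hs' z)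
    _ = hsNormSq (s - s') / (4 * a ^ 2 * (m : ℝ) ^ 2) := by
        simp_rw [Fintype.sum_prod_type, hsNormSq, sum_div, Fintype.sum_bool]
        refine sum_congr rfl fun u _ => sum_congr rfl fun v _ => ?_
        simp only [w, w', twoPointWeight, boolSign_true, boolSign_false, Matrix.sub_apply]
        field

lemma measurableSet_cell (u v : Fin m) : MeasurableSet {z : Obs m | z.1 = u ∧ z.2.1 = v} :=
  (measurable_fst (measurableSet_singleton u)).inter
    (measurable_snd.fst (measurableSet_singleton v))

lemma measurable_twoPointObs (a : ℝ) : Measurable (twoPointObs (m := m) a) :=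
  measurable_of_countable _

lemma ae_abs_response_le_twoPointLaw (ha : 0 ≤ a) (s : Matrix (Fin m) (Fin m) ℝ) :
    ∀ᵐ z ∂twoPointLaw a s, |z.2.2| ≤ a := by
  rw [twoPointLaw, ae_map_iff (measurable_twoPointObs a).aemeasurable
    (measurableSet_le measurable_snd.snd.abs measurable_const)]
  exact Filter.Eventually.of_forall fun z => by
    rw [twoPointObs, abs_mul, abs_boolSign, one_mul, abs_of_nonneg ha]

lemma isProbabilityMeasure_twoPointLaw [NeZero m] (ha : 0 < a) (hs : ∀ u v, |s u v| ≤ a / 2) :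
    IsProbabilityMeasure (twoPointLaw a s) :=
  have := isProbabilityMeasure_discreteMeasure (twoPointWeight_nonneg ha hs)
    (sum_twoPointWeight a s)
  Measure.isProbabilityMeasure_map (measurable_twoPointObs a).aemeasurable

lemma uniformDesign_twoPointLaw [NeZero m] (ha : 0 < a) (hs : ∀ u v, |s u v| ≤ a / 2) :
    UniformDesign m (twoPointLaw a s) := by
  intro u v
  have hm : 0 < (m : ℝ) := Nat.cast_pos.2 (NeZero.pos m)
  have preimage_cell : twoPointObs a ⁻¹' {z : Obs m | z.1 = u ∧ z.2.1 = v} =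
      (({(u, v, true), (u, v, false)} : Finset _) : Set (Fin m × Fin m × Bool)) := by
    ext ⟨x, y, b⟩
    cases b <;> simp [twoPointObs]
  rw [twoPointLaw, Measure.map_apply (measurable_twoPointObs a) (measurableSet_cell u v),
    preimage_cell, discreteMeasure_coe, sum_pair (by simp),
    ← ENNReal.ofReal_add (twoPointWeight_nonneg ha hs _) (twoPointWeight_nonneg ha hs _),
    twoPointWeight_true_add_false, ENNReal.ofReal_inv_of_pos (by positivity),
    ENNReal.ofReal_pow hm.le, ENNReal.ofReal_natCast]

lemma regKernel_twoPointLaw [NeZero m] (ha : 0 < a) (hs : ∀ u v, |s u v| ≤ a / 2) :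
    regKernel m (twoPointLaw a s) = s := by
  have hm : (m : ℝ) ≠ 0 := NeZero.ne _
  have := isProbabilityMeasure_discreteMeasure (twoPointWeight_nonneg ha hs)
    (sum_twoPointWeight a s)
  have real_singleton (z) :
      (discreteMeasure (twoPointWeight a s)).real {z} = twoPointWeight a s z := by
    rw [Measure.real, discreteMeasure_singleton,
      ENNReal.toReal_ofReal (twoPointWeight_nonneg ha hs z)]
  ext u v
  have measurable_response :
      Measurable fun z : Obs m => if z.1 = u ∧ z.2.1 = v then z.2.2 else 0 :=
    Measurable.ite (measurableSet_cell u v) measurable_snd.snd measurable_const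
  rw [regKernel, Matrix.of_apply, twoPointLaw,
    integral_map (measurable_twoPointObs a).aemeasurable measurable_response.aestronglyMeasurable,
    integral_fintype Integrable.of_finite]
  simp_rw [real_singleton, Fintype.sum_prod_type, Fintype.sum_bool]
  rw [sum_eq_single u (fun x _ hx => by simp [twoPointObs, hx]) (by simp),
    sum_eq_single v (fun y _ hy => by simp [twoPointObs, hy]) (by simp)]
  simp only [twoPointObs, twoPointWeight, boolSign_true, boolSign_false, and_self, if_true,
    smul_eq_mul]
  field

end TwoPoint

/-! ### Frobenius norm -/

section Frobenius

open Matrix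

variable {ι κ μ : Type*} [Fintype ι]

lemma transpose_submatrix_mul_self_of_injective [DecidableEq κ] [DecidableEq μ]
    {U : Matrix ι κ ℝ} (hU : Uᵀ * U = 1) {f : μ → κ} (hf : f.Injective) :
    (U.submatrix id f)ᵀ * U.submatrix id f = 1 := by
  rw [transpose_submatrix, ← submatrix_mul _ _ f id f Function.bijective_id, hU,
    submatrix_one _ hf]

variable [Fintype κ] [Fintype μ]

/-- The squared Frobenius norm of a rectangular matrix; on `m × m` matrices it is `hsNormSq`. -/
def frobSq (A : Matrix ι κ ℝ) : ℝ := ∑ i, ∑ j, A i j ^ 2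

lemma hsNormSq_eq_frobSq {m : ℕ} (A : Matrix (Fin m) (Fin m) ℝ) : hsNormSq A = frobSq A := rfl

lemma frobSq_transpose (A : Matrix ι κ ℝ) : frobSq Aᵀ = frobSq A := sum_comm

lemma frobSq_sub_comm (A B : Matrix ι κ ℝ) : frobSq (A - B) = frobSq (B - A) := by
  simp_rw [frobSq, Matrix.sub_apply, sub_sq_comm]

lemma frobSq_smul (c : ℝ) (A : Matrix ι κ ℝ) : frobSq (c • A) = c ^ 2 * frobSq A := by
  simp_rw [frobSq, Matrix.smul_apply, smul_eq_mul, mul_pow, mul_sum]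

lemma frobSq_eq_trace (A : Matrix ι κ ℝ) : frobSq A = (Aᵀ * A).trace := by
  rw [← frobSq_transpose]
  simp_rw [frobSq, trace, diag_apply, mul_apply, transpose_apply, sq]

lemma frobSq_sub_le (A B C : Matrix ι κ ℝ) :
    frobSq (A - C) ≤ 2 * (frobSq (A - B) + frobSq (B - C)) := by
  simp_rw [frobSq, ← sum_add_distrib, mul_sum, Matrix.sub_apply]
  refine sum_le_sum fun i _ => sum_le_sum fun j _ => ?_
  simpa using add_sq_le (a := A i j - B i j) (b := B i j - C i j)

lemma frobSq_mul_of_transpose_mul_self [DecidableEq κ] {U : Matrix ι κ ℝ} (hU : Uᵀ * U = 1)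
    (A : Matrix κ μ ℝ) : frobSq (U * A) = frobSq A := by
  rw [frobSq_eq_trace, frobSq_eq_trace, transpose_mul, Matrix.mul_assoc, ← Matrix.mul_assoc Uᵀ,
    hU, Matrix.one_mul]

lemma frobSq_conj_of_transpose_mul_self [DecidableEq κ] {U : Matrix ι κ ℝ} (hU : Uᵀ * U = 1)
    (A : Matrix κ κ ℝ) : frobSq (U * A * Uᵀ) = frobSq A := by
  rw [Matrix.mul_assoc, frobSq_mul_of_transpose_mul_self hU, ← frobSq_transpose, transpose_mul,
    transpose_transpose, frobSq_mul_of_transpose_mul_self hU, frobSq_transpose]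

lemma sum_sq_row_le_one [DecidableEq κ] {U : Matrix ι κ ℝ} (hU : Uᵀ * U = 1) (i : ι) :
    ∑ j, U i j ^ 2 ≤ 1 := by
  have idempotent : U * Uᵀ * (U * Uᵀ) = U * Uᵀ := by
    rw [Matrix.mul_assoc, ← Matrix.mul_assoc Uᵀ, hU, Matrix.one_mul]
  have diag_eq : ∑ j, U i j ^ 2 = (U * Uᵀ) i i := by
    simp_rw [mul_apply, transpose_apply, sq]
  have sq_diag_le : (U * Uᵀ) i i ^ 2 ≤ (U * Uᵀ) i i := by
    have symm (k) : (U * Uᵀ) k i = (U * Uᵀ) i k := by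
      rw [← transpose_apply (U * Uᵀ), transpose_mul, transpose_transpose]
    calc (U * Uᵀ) i i ^ 2 ≤ ∑ k, (U * Uᵀ) i k ^ 2 :=
          single_le_sum (f := fun k => (U * Uᵀ) i k ^ 2) (fun k _ => sq_nonneg _) (mem_univ i)
      _ = (U * Uᵀ * (U * Uᵀ)) i i := by simp_rw [mul_apply (M := U * Uᵀ), symm, sq]
      _ = (U * Uᵀ) i i := by rw [idempotent]
  have : 0 ≤ ∑ j, U i j ^ 2 := by positivity
  nlinarith

lemma exists_card_support_row_pos [DecidableEq κ] [Nonempty κ] {U : Matrix ι κ ℝ}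
    (hU : Uᵀ * U = 1) : ∃ i, 0 < #{j | U i j ≠ 0} := by
  obtain ⟨j⟩ := ‹Nonempty κ›
  by_contra! h
  have col_eq_zero (i) : U i j = 0 := by
    have := card_eq_zero.1 (Nat.le_zero.1 (h i))
    simpa using filter_eq_empty_iff.1 this (mem_univ j)
  have := congrFun₂ hU j j
  simp [mul_apply, col_eq_zero] at this

lemma sq_sum_mul_le_card_support_mul {c x : κ → ℝ} (hc : ∀ j, |c j| ≤ 1) {d : ℕ}
    (hd : #{j | x j ≠ 0} ≤ d) : (∑ j, c j * x j) ^ 2 ≤ d * ∑ j, x j ^ 2 := by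
  calc (∑ j, c j * x j) ^ 2 = (∑ j with x j ≠ 0, c j * x j) ^ 2 := by
        rw [sum_filter_of_ne fun j _ => right_ne_zero_of_mul]
    _ ≤ #{j | x j ≠ 0} * ∑ j with x j ≠ 0, (c j * x j) ^ 2 := sq_sum_le_card_mul_sum_sq
    _ ≤ d * ∑ j, (c j * x j) ^ 2 := by
        gcongr
        exact subset_univ _
    _ ≤ d * ∑ j, x j ^ 2 := by
        refine mul_le_mul_of_nonneg_left (sum_le_sum fun j _ => ?_) d.cast_nonneg
        rw [mul_pow]
        exact mul_le_of_le_one_left (sq_nonneg _) ((sq_le_one_iff_abs_le_one _).2 (hc j))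

end Frobenius

/-! ### Reduction to a hypercube of kernels -/

section Hypercube

variable {m : ℕ} {ι : Type*} [Fintype ι]

/-- Entrywise truncation of a kernel to `[-b, b]`. -/
def clamp (b : ℝ) (S : Matrix (Fin m) (Fin m) ℝ) : Matrix (Fin m) (Fin m) ℝ :=
  Matrix.of fun u v => max (min (S u v) b) (-b)

lemma abs_clamp_le {b : ℝ} (hb : 0 ≤ b) (S : Matrix (Fin m) (Fin m) ℝ) (u v : Fin m) :
    |clamp b S u v| ≤ b :=
  abs_le.2 ⟨le_max_right _ _, max_le (min_le_right _ _) (by linarith)⟩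

lemma clamp_eq_self {b : ℝ} {S : Matrix (Fin m) (Fin m) ℝ} (h : ∀ u v, |S u v| ≤ b) :
    clamp b S = S := by
  ext u v
  have := abs_le.1 (h u v)
  rw [clamp, Matrix.of_apply, min_eq_left this.2, max_eq_left this.1]

lemma hsNormSq_clamp_sub_clamp_le (b : ℝ) (S T : Matrix (Fin m) (Fin m) ℝ) :
    hsNormSq (clamp b S - clamp b T) ≤ hsNormSq (S - T) := by
  refine sum_le_sum fun u _ => sum_le_sum fun v _ => sq_le_sq.2 ?_
  exact (abs_max_sub_max_le_abs _ _ _).trans (abs_inf_sub_inf_le_abs _ _ _)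

lemma le_hsNormSq_sub_of_nearest {S : (ι → Bool) → Matrix (Fin m) (Fin m) ℝ}
    {A : Matrix (Fin m) (Fin m) ℝ} {R θ : ℝ} (hR : 0 ≤ R) {σ τ : ι → Bool}
    (sep : R * hammingDist τ σ ≤ θ * hsNormSq (S τ - S σ)) (hθ : 0 < θ)
    (nearest : hsNormSq (A - S τ) ≤ hsNormSq (A - S σ)) {t : ℝ} (ht : t ≤ hammingDist τ σ) :
    R * t / (4 * θ) ≤ hsNormSq (A - S σ) := by
  have quasi_triangle : hsNormSq (S τ - S σ) ≤ 4 * hsNormSq (A - S σ) := by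
    simp_rw [hsNormSq_eq_frobSq] at nearest ⊢
    linarith [frobSq_sub_le (S τ) A (S σ), frobSq_sub_comm (S τ) A]
  rw [div_le_iff₀ (by positivity)]
  calc R * t ≤ R * hammingDist τ σ := by gcongr
    _ ≤ θ * hsNormSq (S τ - S σ) := sep
    _ ≤ θ * (4 * hsNormSq (A - S σ)) := by gcongr
    _ = hsNormSq (A - S σ) * (4 * θ) := by ring

lemma one_eighth_le_sum_min_twoPointWeight [NeZero m] {a : ℝ} (ha : 0 < a) {n : ℕ}
    {S T : Matrix (Fin m) (Fin m) ℝ} (h : n * hsNormSq (S - T) ≤ a ^ 2 * (m : ℝ) ^ 2) :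
    1 / 8 ≤ ∑ x : Fin n → Fin m × Fin m × Bool,
      min (∏ k, twoPointWeight a (clamp (a / 2) S) (x k))
        (∏ k, twoPointWeight a (clamp (a / 2) T) (x k)) := by
  have hm : 0 < (m : ℝ) := Nat.cast_pos.2 (NeZero.pos m)
  have clamp_bound := abs_clamp_le (m := m) (half_pos ha).le
  refine one_eighth_le_sum_min_prod (twoPointWeight_nonneg ha (clamp_bound S))
    (twoPointWeight_nonneg ha (clamp_bound T)) (sum_twoPointWeight _ _) (sum_twoPointWeight _ _) ?_
  calc n * (1 - bhattacharyya (twoPointWeight a (clamp (a / 2) S))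
          (twoPointWeight a (clamp (a / 2) T)))
      ≤ n * (hsNormSq (clamp (a / 2) S - clamp (a / 2) T) / (4 * a ^ 2 * (m : ℝ) ^ 2)) := by
        gcongr
        exact one_sub_bhattacharyya_twoPointWeight_le ha (clamp_bound S) (clamp_bound T)
    _ ≤ n * (hsNormSq (S - T) / (4 * a ^ 2 * (m : ℝ) ^ 2)) := by
        gcongr
        exact hsNormSq_clamp_sub_clamp_le _ _ _
    _ ≤ 1 / 2 := by
        rw [mul_div_assoc', div_le_iff₀ (by positivity)]
        nlinarith [mul_pos (pow_pos ha 2) (pow_pos hm 2)]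

variable [NeZero m] [DecidableEq ι] [Nonempty ι] {a : ℝ} {n : ℕ} {R : ℝ}
  {S : (ι → Bool) → Matrix (Fin m) (Fin m) ℝ}

/- Vertices of the hypercube with an entry above `a / 2` carry no law in the model; truncating
their entries keeps neighbouring laws close, so Assouad's lemma still sees the whole hypercube,
and the exceptional vertices are discarded only afterwards. -/
lemma exists_le_sum_prod_twoPointWeight (ha : 0 < a)
    (close : ∀ σ τ, hammingDist σ τ = 1 → n * hsNormSq (S σ - S τ) ≤ a ^ 2 * (m : ℝ) ^ 2)
    (card_large : 64 * #{σ | ∃ u v, a / 2 < |S σ u v|} ≤ 2 ^ Fintype.card ι)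
    (est : (Fin n → Fin m × Fin m × Bool) → ι → Bool) :
    ∃ σ, (∀ u v, |S σ u v| ≤ a / 2) ∧ 1 / 128 ≤
      ∑ x with Fintype.card ι * (1 / 8 : ℝ) / 4 ≤ hammingDist (est x) σ,
        ∏ k, twoPointWeight a (S σ) (x k) := by
  let p (σ : ι → Bool) (x : Fin n → Fin m × Fin m × Bool) : ℝ :=
    ∏ k, twoPointWeight a (clamp (a / 2) (S σ)) (x k)
  let T (σ : ι → Bool) : ℝ :=
    ∑ x with Fintype.card ι * (1 / 8 : ℝ) / 4 ≤ hammingDist (est x) σ, p σ x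
  have p_nonneg (σ x) : 0 ≤ p σ x := prod_nonneg fun k _ =>
    twoPointWeight_nonneg ha (abs_clamp_le (half_pos ha).le (S σ)) (x k)
  have p_sum (σ) : ∑ x, p σ x = 1 := by rw [← Fintype.sum_pow, sum_twoPointWeight, one_pow]
  have le_sum_T : 2 ^ Fintype.card ι * (1 / 8) / 4 ≤ ∑ σ, T σ :=
    assouad p_nonneg p_sum (by norm_num)
      (fun σ τ h => one_eighth_le_sum_min_twoPointWeight ha (close σ τ h)) est
  have T_le_one (σ) : T σ ≤ 1 := (p_sum σ).le.trans' <|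
    sum_le_sum_of_subset_of_nonneg (subset_univ _) fun x _ _ => p_nonneg σ x
  obtain ⟨σ, h_notMem, hσ⟩ := exists_notMem_le_of_card_add_lt_sum
    (bad := {σ | ∃ u v, a / 2 < |S σ u v|}) (ε := 1 / 128) (by norm_num) T_le_one <| by
      have : (64 * #{σ | ∃ u v, a / 2 < |S σ u v|} : ℝ) ≤ 2 ^ Fintype.card ι := by
        exact_mod_cast card_large
      have : (0 : ℝ) < 2 ^ Fintype.card ι := by positivity
      rw [Fintype.card_fun, Fintype.card_bool]
      push_cast
      linarith
  have bounded (u v) : |S σ u v| ≤ a / 2 := by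
    simp only [mem_filter_univ, not_exists, not_lt] at h_notMem
    exact h_notMem u v
  refine ⟨σ, bounded, ?_⟩
  simpa only [T, p, clamp_eq_self bounded] using hσ

lemma exists_le_pi_twoPointLaw (ha : 0 < a) (hR : 0 ≤ R)
    (sep : ∀ σ τ, R * hammingDist σ τ ≤ 4 * Fintype.card ι * hsNormSq (S σ - S τ))
    (close : ∀ σ τ, hammingDist σ τ = 1 → n * hsNormSq (S σ - S τ) ≤ a ^ 2 * (m : ℝ) ^ 2)
    (card_large : 64 * #{σ | ∃ u v, a / 2 < |S σ u v|} ≤ 2 ^ Fintype.card ι)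
    (Shat : (Fin n → Obs m) → Matrix (Fin m) (Fin m) ℝ) :
    ∃ σ, (∀ u v, |S σ u v| ≤ a / 2) ∧ ENNReal.ofReal (1 / 128) ≤
      Measure.pi (fun _ : Fin n => twoPointLaw a (S σ))
        {ω | R / 512 ≤ hsNormSq (Shat ω - S σ)} := by
  classical
  choose decode nearest using fun A => Finite.exists_min fun τ => hsNormSq (A - S τ)
  obtain ⟨σ, bounded, hσ⟩ := exists_le_sum_prod_twoPointWeight ha close card_large
    fun x => decode (Shat (twoPointObs a ∘ x))
  refine ⟨σ, bounded, (ENNReal.ofReal_le_ofReal (hσ.trans ?_)).trans <|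
    ofReal_sum_prod_le_pi_map_discreteMeasure (twoPointWeight_nonneg ha bounded)
      (sum_twoPointWeight a (S σ)) (twoPointObs a) _⟩
  refine sum_le_sum_of_subset_of_nonneg (monotone_filter_right _ fun x _ hx => ?_) fun x _ _ =>
    prod_nonneg fun k _ => twoPointWeight_nonneg ha bounded (x k)
  refine (le_hsNormSq_sub_of_nearest hR (sep _ _) (by positivity) (nearest _ σ) hx).trans_eq' ?_
  field

end Hypercube

/-! ### Kernels in the span of the first eigenfunctions -/

section Eigenframe

open Matrix

variable {m l : ℕ} {φ : ℕ → Fin m → ℝ} {lam : ℕ → ℝ}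

/-- The matrix whose columns are the eigenfunctions; column `k : Fin m` holds `φ (k + 1)` because
the eigenfunctions are numbered from `1`. -/
def eigenMatrix (φ : ℕ → Fin m → ℝ) : Matrix (Fin m) (Fin m) ℝ := of fun u k => φ (k + 1) u

lemma succ_mem_Icc (k : Fin m) : (k : ℕ) + 1 ∈ Icc 1 m := by simp

lemma eigenMatrix_transpose_mul_self (hφ : OrthonormalFamily m φ) :
    (eigenMatrix φ)ᵀ * eigenMatrix φ = 1 := by
  ext j k
  simpa [mul_apply, eigenMatrix, one_apply, Fin.ext_iff] using
    hφ _ (succ_mem_Icc j) _ (succ_mem_Icc k)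

lemma card_support_eigenMatrix_le_sparsity (φ : ℕ → Fin m → ℝ) (u : Fin m) :
    #{k | eigenMatrix φ u k ≠ 0} ≤ sparsity m φ := by
  calc #{k | eigenMatrix φ u k ≠ 0} ≤ #{j ∈ Icc 1 m | φ j u ≠ 0} :=
        card_le_card_of_injOn (fun k => (k : ℕ) + 1)
          (fun k hk => by simpa [eigenMatrix] using (mem_filter_univ k).1 hk)
          (fun j _ k _ h => Fin.ext (Nat.succ_injective h))
    _ ≤ sparsity m φ := le_sup (f := fun v => #{j ∈ Icc 1 m | φ j v ≠ 0}) (mem_univ u)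

lemma sparsity_pos [NeZero m] (hφ : OrthonormalFamily m φ) : 0 < sparsity m φ := by
  obtain ⟨u, hu⟩ := exists_card_support_row_pos (eigenMatrix_transpose_mul_self hφ)
  exact hu.trans_le (card_support_eigenMatrix_le_sparsity φ u)

lemma sum_sum_sq_mulVec_eq_hsNormSq (hφ : OrthonormalFamily m φ) (S : Matrix (Fin m) (Fin m) ℝ) :
    ∑ k ∈ Icc 1 m, ∑ u, (S *ᵥ φ k) u ^ 2 = hsNormSq S := by
  set Φ := eigenMatrix φ
  have mul_transpose : Φᵀᵀ * Φᵀ = 1 := by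
    rw [transpose_transpose, mul_eq_one_comm]
    exact eigenMatrix_transpose_mul_self hφ
  calc ∑ k ∈ Icc 1 m, ∑ u, (S *ᵥ φ k) u ^ 2 = ∑ k : Fin m, ∑ u, (S * Φ) u k ^ 2 := by
        rw [← Ico_add_one_right_eq_Icc, sum_Ico_eq_sum_range, add_tsub_cancel_right, sum_range]
        refine sum_congr rfl fun k _ => sum_congr rfl fun u _ => ?_
        rw [add_comm, mul_apply]
        rfl
    _ = frobSq (Φᵀ * Sᵀ) := by rw [← transpose_mul]; rfl
    _ = hsNormSq S := by
        rw [frobSq_mul_of_transpose_mul_self mul_transpose, frobSq_transpose, hsNormSq_eq_frobSq]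

lemma sobolevHSSq_le_mul_hsNormSq (hφ : OrthonormalFamily m φ)
    (hlam : ∀ k ∈ Icc 1 l, lam k ≤ lam l) {S : Matrix (Fin m) (Fin m) ℝ}
    (hS : ∀ k ∈ Icc 1 m, l < k → S *ᵥ φ k = 0) :
    sobolevHSSq lam φ S ≤ lam l * hsNormSq S := by
  rw [sobolevHSSq, ← sum_sum_sq_mulVec_eq_hsNormSq hφ, mul_sum]
  refine sum_le_sum fun k hk => ?_
  obtain hkl | hkl := le_or_gt k l
  · have := hlam k (mem_Icc.2 ⟨(mem_Icc.1 hk).1, hkl⟩)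
    gcongr
  · simp [hS k hk hkl]

lemma exists_eigenframe (hφ : OrthonormalFamily m φ) (hlam : ∀ k ∈ Icc 1 l, lam k ≤ lam l)
    (hlm : l ≤ m) (J : Type*) [Fintype J] [DecidableEq J] (hJ : Fintype.card J ≤ l) :
    ∃ U : Matrix (Fin m) J ℝ, Uᵀ * U = 1 ∧ (∀ u, #{j | U u j ≠ 0} ≤ sparsity m φ) ∧
      ∀ M : Matrix J J ℝ, sobolevHSSq lam φ (U * M * Uᵀ) ≤ lam l * hsNormSq (U * M * Uᵀ) := by
  let e : J → Fin m := fun j => Fin.castLE (hJ.trans hlm) (Fintype.equivFin J j)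
  have e_lt (j) : (e j : ℕ) < l := (Fintype.equivFin J j).isLt.trans_le hJ
  have e_injective : e.Injective :=
    (Fin.castLE_injective _).comp (Fintype.equivFin J).injective
  refine ⟨(eigenMatrix φ).submatrix id e, ?_, fun u => ?_, fun M => ?_⟩
  · exact transpose_submatrix_mul_self_of_injective (eigenMatrix_transpose_mul_self hφ) e_injective
  · refine (card_le_card_of_injOn e (fun j hj => ?_) e_injective.injOn).trans
      (card_support_eigenMatrix_le_sparsity φ u)
    simpa using (mem_filter_univ j).1 hj
  · refine sobolevHSSq_le_mul_hsNormSq hφ hlam fun k hk hlk => ?_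
    have coeff_eq_zero : ((eigenMatrix φ).submatrix id e)ᵀ *ᵥ φ k = 0 := by
      ext j
      exact (hφ _ (succ_mem_Icc (e j)) k hk).trans (if_neg (by have := e_lt j; omega))
    rw [← mulVec_mulVec, coeff_eq_zero, mulVec_zero]

end Eigenframe

/-! ### Assouad families and the maximal risk -/

section MaximalRisk

open Matrix

variable {m n r l : ℕ} {ρ a R : ℝ} {φ : ℕ → Fin m → ℝ} {lam : ℕ → ℝ}
  {I J : Type*} [Fintype I] [DecidableEq I] [Fintype J] {U : Matrix (Fin m) J ℝ}

/-- The largest probability, over the class `𝒫_{r,ρ,a}`, that the squared `L₂(Π²)` error of the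
estimator `Shat` is at least `e`. -/
def maximalRisk (r : ℕ) (ρ a : ℝ) (lam : ℕ → ℝ) (φ : ℕ → Fin m → ℝ)
    (Shat : (Fin n → Obs m) → Matrix (Fin m) (Fin m) ℝ) (e : ℝ≥0∞) : ℝ≥0∞ :=
  ⨆ (P : Measure (Obs m)) (_ : MemP m r ρ a lam φ P),
    (Measure.pi fun _ : Fin n => P) {ω | e ≤ ENNReal.ofReal (l2PiSq (Shat ω - regKernel m P))}

lemma maximalRisk_anti (Shat : (Fin n → Obs m) → Matrix (Fin m) (Fin m) ℝ) :
    Antitone (maximalRisk r ρ a lam φ Shat) :=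
  fun _ _ he => iSup₂_mono fun _ _ => measure_mono fun _ hω => he.trans hω

/-- A family of coefficient matrices, indexed by sign patterns, whose kernels `U * M σ * Uᵀ` can be
used as the hypotheses of Assouad's lemma at squared radius `R`: their separation grows with the
Hamming distance, adjacent kernels cannot be distinguished from `n` responses bounded by `a`, and
only a few sign patterns give a kernel with an entry above `a / 2`. -/
structure IsAssouadFamily (U : Matrix (Fin m) J ℝ) (n r : ℕ) (a R : ℝ)
    (M : (I → Bool) → Matrix J J ℝ) : Prop where
  isSymm : ∀ σ, (M σ).IsSymm
  rank_le : ∀ σ, (M σ).rank ≤ r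
  frobSq_le : ∀ σ, frobSq (M σ) ≤ R
  separated : ∀ σ τ, R * hammingDist σ τ ≤ 4 * Fintype.card I * frobSq (M σ - M τ)
  close : ∀ σ τ, hammingDist σ τ = 1 → n * frobSq (M σ - M τ) ≤ a ^ 2 * m ^ 2
  card_large :
    64 * #{σ | ∃ u v, a / 2 < |(U * M σ * Uᵀ) u v|} ≤ 2 ^ Fintype.card I

lemma IsAssouadFamily.memP_twoPointLaw [NeZero m] [DecidableEq J] {M : (I → Bool) → Matrix J J ℝ}
    (hM : IsAssouadFamily U n r a R M) (ha : 0 < a) (hU : Uᵀ * U = 1)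
    (hW : ∀ M : Matrix J J ℝ, sobolevHSSq lam φ (U * M * Uᵀ) ≤ lam l * hsNormSq (U * M * Uᵀ))
    (hlam : 0 ≤ lam l) (hR : lam l * R ≤ ρ ^ 2 * m ^ 2) {σ : I → Bool}
    (hσ : ∀ u v, |(U * M σ * Uᵀ) u v| ≤ a / 2) :
    MemP m r ρ a lam φ (twoPointLaw a (U * M σ * Uᵀ)) := by
  refine ⟨isProbabilityMeasure_twoPointLaw ha hσ, uniformDesign_twoPointLaw ha hσ,
    ae_abs_response_le_twoPointLaw ha.le _, ?_⟩
  rw [regKernel_twoPointLaw ha hσ]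
  refine ⟨?_, ?_, ?_⟩
  · rw [IsSymm, transpose_mul, transpose_mul, transpose_transpose, hM.isSymm σ, Matrix.mul_assoc]
  · exact (rank_mul_le_left _ _).trans ((rank_mul_le_right _ _).trans (hM.rank_le σ))
  · calc sobolevHSSq lam φ (U * M σ * Uᵀ) ≤ lam l * hsNormSq (U * M σ * Uᵀ) := hW _
      _ = lam l * frobSq (M σ) := by
          rw [hsNormSq_eq_frobSq, frobSq_conj_of_transpose_mul_self hU]
      _ ≤ lam l * R := by gcongr; exact hM.frobSq_le σ
      _ ≤ ρ ^ 2 * m ^ 2 := hR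

lemma IsAssouadFamily.le_maximalRisk [NeZero m] [Nonempty I] [DecidableEq J]
    {M : (I → Bool) → Matrix J J ℝ} (hM : IsAssouadFamily U n r a R M) (ha : 0 < a)
    (hU : Uᵀ * U = 1)
    (hW : ∀ M : Matrix J J ℝ, sobolevHSSq lam φ (U * M * Uᵀ) ≤ lam l * hsNormSq (U * M * Uᵀ))
    (hlam : 0 ≤ lam l) (hR : lam l * R ≤ ρ ^ 2 * m ^ 2)
    (Shat : (Fin n → Obs m) → Matrix (Fin m) (Fin m) ℝ) :
    ENNReal.ofReal (1 / 128) ≤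
      maximalRisk r ρ a lam φ Shat (ENNReal.ofReal (R / 512 / m ^ 2)) := by
  have frobSq_sub (σ τ) : hsNormSq (U * M σ * Uᵀ - U * M τ * Uᵀ) = frobSq (M σ - M τ) := by
    rw [← Matrix.sub_mul, ← Matrix.mul_sub, hsNormSq_eq_frobSq,
      frobSq_conj_of_transpose_mul_self hU]
  have hR_nonneg : 0 ≤ R :=
    (sum_nonneg fun _ _ => sum_nonneg fun _ _ => sq_nonneg _).trans (hM.frobSq_le fun _ => true)
  obtain ⟨σ, hσ, hprob⟩ := exists_le_pi_twoPointLaw (S := fun σ => U * M σ * Uᵀ) ha hR_nonneg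
    (by simpa only [frobSq_sub] using hM.separated) (by simpa only [frobSq_sub] using hM.close)
    hM.card_large Shat
  refine le_iSup₂_of_le _ (hM.memP_twoPointLaw ha hU hW hlam hR hσ)
    (hprob.trans (measure_mono fun ω hω => ENNReal.ofReal_le_ofReal ?_))
  rw [regKernel_twoPointLaw ha hσ]
  exact div_le_div_of_nonneg_right hω (by positivity)

end MaximalRisk

/-! ### The three families of kernels -/

section Families

open Matrix

variable {m n r l d : ℕ} {a κ : ℝ}

lemma card_exists_half_lt_abs_le {Ω α β : Type*} [Fintype Ω] {S : Ω → Matrix α β ℝ}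
    [DecidablePred fun ω => ∃ u v, a / 2 < |S ω u v|] {bad : Finset Ω} (ha : 0 ≤ a)
    (hS : ∀ ω ∉ bad, ∀ u v, S ω u v ^ 2 ≤ a ^ 2 / 4) :
    #{ω | ∃ u v, a / 2 < |S ω u v|} ≤ #bad := by
  refine card_le_card fun ω hω => ?_
  obtain ⟨u, v, huv⟩ := (mem_filter_univ ω).1 hω
  by_contra hgood
  refine huv.not_ge (abs_le_of_sq_le_sq ((hS ω hgood u v).trans_eq ?_) (by positivity))
  ring

/-- The `1 × 1` matrix `± κ`. -/
def signMatrix (κ : ℝ) (σ : Unit → Bool) : Matrix Unit Unit ℝ :=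
  κ • of fun _ _ => boolSign (σ ())

lemma frobSq_signMatrix_sub (κ : ℝ) (σ τ : Unit → Bool) :
    frobSq (signMatrix κ σ - signMatrix κ τ) = 4 * κ ^ 2 * hammingDist σ τ := by
  have := sum_sq_boolSign_sub σ τ
  rw [signMatrix, signMatrix, ← smul_sub, frobSq_smul]
  simp only [univ_unique, sum_singleton, frobSq, Matrix.sub_apply, of_apply] at this ⊢
  rw [this]
  ring

lemma isAssouadFamily_signMatrix {U : Matrix (Fin m) Unit ℝ} (hU : Uᵀ * U = 1)
    (ha : 0 ≤ a) (hr : 1 ≤ r) (hn : n * (4 * κ ^ 2) ≤ a ^ 2 * m ^ 2) (hκ : 4 * κ ^ 2 ≤ a ^ 2) :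
    IsAssouadFamily U n r a (κ ^ 2) (signMatrix κ) where
  isSymm _ := rfl
  rank_le σ := (rank_le_card_width _).trans (by simpa using hr)
  frobSq_le σ := by
    rw [signMatrix, frobSq_smul]
    simp [frobSq, sq (boolSign _), boolSign_mul_self]
  separated σ τ := by
    rw [frobSq_signMatrix_sub, Fintype.card_unit, Nat.cast_one]
    have : 0 ≤ κ ^ 2 * hammingDist σ τ := by positivity
    linarith
  close σ τ hστ := by
    rw [frobSq_signMatrix_sub, hστ, Nat.cast_one, mul_one]
    exact hn
  card_large := by
    refine (Nat.mul_le_mul_left 64 (card_exists_half_lt_abs_le (bad := ∅) ha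
      fun σ _ u v => ?_)).trans (by simp)
    have entry_le_one (u) : U u () ^ 2 ≤ 1 := by simpa using sum_sq_row_le_one hU u
    calc (U * signMatrix κ σ * Uᵀ) u v ^ 2
        = κ ^ 2 * (U u () ^ 2 * U v () ^ 2) * (boolSign (σ ()) * boolSign (σ ())) := by
          simp only [mul_apply, signMatrix, univ_unique, sum_singleton, transpose_apply,
            Matrix.smul_apply, of_apply, smul_eq_mul]
          ring
      _ = κ ^ 2 * (U u () ^ 2 * U v () ^ 2) := by rw [boolSign_mul_self, mul_one]
      _ ≤ κ ^ 2 := mul_le_of_le_one_right (sq_nonneg κ)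
          (mul_le_one₀ (entry_le_one u) (sq_nonneg _) (entry_le_one v))
      _ ≤ a ^ 2 / 4 := by linarith

lemma frobSq_vecMulVec_self_sub {ι : Type*} [Fintype ι] (x y : ι → ℝ) :
    frobSq (vecMulVec x x - vecMulVec y y) =
      (x ⬝ᵥ x) ^ 2 + (y ⬝ᵥ y) ^ 2 - 2 * (x ⬝ᵥ y) ^ 2 := by
  simp only [frobSq, Matrix.sub_apply, vecMulVec_apply, dotProduct, sq, sum_mul_sum]
  simp only [mul_sum, ← sum_add_distrib, ← sum_sub_distrib]
  refine sum_congr rfl fun i _ => sum_congr rfl fun j _ => ?_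
  ring

lemma mul_vecMulVec_mul_transpose_apply {α ι : Type*} [Fintype ι] (U : Matrix α ι ℝ)
    (x : ι → ℝ) (u v : α) :
    (U * vecMulVec x x * Uᵀ) u v = (U *ᵥ x) u * (U *ᵥ x) v := by
  rw [mul_vecMulVec, vecMulVec_mul, vecMul_transpose, vecMulVec_apply]

/-- The concatenation of the sign vectors of `σ` and `τ`. -/
def signVector {α β : Type*} (σ : α → Bool) (τ : β → Bool) : α ⊕ β → ℝ :=
  Sum.elim (fun i => boolSign (σ i)) fun i => boolSign (τ i)

lemma abs_signVector_le_one {α β : Type*} (σ : α → Bool) (τ : β → Bool) (j : α ⊕ β) :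
    |signVector σ τ j| ≤ 1 := by
  cases j <;> simp [signVector, abs_boolSign]

section RankOne

variable {α : Type*} [Fintype α] (t : α → Bool)

lemma signVector_dotProduct (σ τ : α → Bool) :
    signVector σ t ⬝ᵥ signVector τ t = 2 * Fintype.card α - 2 * hammingDist σ τ := by
  have cross (i) : boolSign (σ i) * boolSign (τ i) =
      1 - (boolSign (σ i) - boolSign (τ i)) ^ 2 / 2 := by
    linear_combination (boolSign_mul_self (σ i) + boolSign_mul_self (τ i)) / 2
  simp only [signVector, dotProduct, Fintype.sum_sum_type, Sum.elim_inl, Sum.elim_inr,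
    boolSign_mul_self, cross, sum_sub_distrib, ← sum_div, sum_sq_boolSign_sub]
  simp only [sum_const, card_univ, nsmul_eq_mul, mul_one]
  ring

/-- The rank-one matrix `κ x xᵀ` of the sign vector `x` of `σ` followed by the fixed signs `t`.
Without the fixed half, `σ` and its negation would give the same matrix. -/
def rankOneMatrix (κ : ℝ) (σ : α → Bool) : Matrix (α ⊕ α) (α ⊕ α) ℝ :=
  κ • vecMulVec (signVector σ t) (signVector σ t)

lemma frobSq_rankOneMatrix (κ : ℝ) (σ : α → Bool) :
    frobSq (rankOneMatrix t κ σ) = κ ^ 2 * (2 * Fintype.card α) ^ 2 := by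
  have := frobSq_vecMulVec_self_sub (signVector σ t) 0
  simp only [signVector_dotProduct, hammingDist_self] at this
  rw [rankOneMatrix, frobSq_smul]
  congrm κ ^ 2 * ?_
  simpa using this

lemma frobSq_rankOneMatrix_sub (κ : ℝ) (σ τ : α → Bool) :
    frobSq (rankOneMatrix t κ σ - rankOneMatrix t κ τ) =
      8 * κ ^ 2 * hammingDist σ τ * (2 * Fintype.card α - hammingDist σ τ) := by
  rw [rankOneMatrix, rankOneMatrix, ← smul_sub, frobSq_smul, frobSq_vecMulVec_self_sub]
  simp only [signVector_dotProduct, hammingDist_self]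
  push_cast
  ring

lemma sq_rankOneMatrix_conj_le [DecidableEq α] {U : Matrix (Fin m) (α ⊕ α) ℝ} (hU : Uᵀ * U = 1)
    (hd : ∀ u, #{j | U u j ≠ 0} ≤ d) {b : ℝ} {σ : α → Bool}
    (hσ : ∀ v, (∑ i, boolSign (σ i) * U v (.inl i)) ^ 2 ≤ b)
    (ht : ∀ v, (∑ i, boolSign (t i) * U v (.inr i)) ^ 2 ≤ b) (u v : Fin m) :
    (U * rankOneMatrix t κ σ * Uᵀ) u v ^ 2 ≤ κ ^ 2 * (d * (4 * b)) := by
  have mulVec_eq (v) : (U *ᵥ signVector σ t) v = ∑ j, signVector σ t j * U v j :=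
    sum_congr rfl fun j _ => mul_comm _ _
  have sparse : (U *ᵥ signVector σ t) u ^ 2 ≤ d := by
    rw [mulVec_eq]
    refine (sq_sum_mul_le_card_support_mul (abs_signVector_le_one σ t) (hd u)).trans ?_
    exact mul_le_of_le_one_right d.cast_nonneg (sum_sq_row_le_one hU u)
  have concentrated : (U *ᵥ signVector σ t) v ^ 2 ≤ 4 * b := by
    rw [mulVec_eq, Fintype.sum_sum_type]
    simp only [signVector, Sum.elim_inl, Sum.elim_inr]
    linarith [add_sq_le (a := ∑ i, boolSign (σ i) * U v (.inl i))
      (b := ∑ i, boolSign (t i) * U v (.inr i)), hσ v, ht v]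
  rw [rankOneMatrix, Matrix.mul_smul, Matrix.smul_mul, Matrix.smul_apply,
    mul_vecMulVec_mul_transpose_apply, smul_eq_mul, mul_pow, mul_pow]
  gcongr

lemma isAssouadFamily_rankOneMatrix {h : ℕ} {U : Matrix (Fin m) (Fin h ⊕ Fin h) ℝ}
    {t : Fin h → Bool} (hU : Uᵀ * U = 1) (hd : ∀ u, #{j | U u j ≠ 0} ≤ d)
    (ht : ∀ v, (∑ i, boolSign (t i) * U v (.inr i)) ^ 2 ≤ 16 * Real.log m)
    (ha : 0 ≤ a) (hm : 2 ≤ Real.log m) (hr : 1 ≤ r) (hhl : 2 * h ≤ l) (hlh : l ≤ 3 * h)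
    (hn : n * (8 * κ ^ 2 * l) ≤ a ^ 2 * m ^ 2) (hκ : 256 * κ ^ 2 * (d * Real.log m) ≤ a ^ 2) :
    IsAssouadFamily U n r a (κ ^ 2 * l ^ 2) (rankOneMatrix t κ) where
  isSymm σ := by rw [IsSymm, rankOneMatrix, transpose_smul, transpose_vecMulVec]
  rank_le σ := by
    rw [rankOneMatrix, ← smul_vecMulVec]
    exact (rank_vecMulVec_le _ _).trans hr
  frobSq_le σ := by
    have hhl' : (2 : ℝ) * h ≤ l := by exact_mod_cast hhl
    rw [frobSq_rankOneMatrix, Fintype.card_fin]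
    gcongr
  separated σ τ := by
    have hlh' : (l : ℝ) ≤ 3 * h := by exact_mod_cast hlh
    have dist_le : (hammingDist σ τ : ℝ) ≤ h := by
      exact_mod_cast hammingDist_le_card_fintype.trans_eq (Fintype.card_fin h)
    rw [frobSq_rankOneMatrix_sub, Fintype.card_fin]
    calc κ ^ 2 * l ^ 2 * hammingDist σ τ ≤ κ ^ 2 * (3 * h) ^ 2 * hammingDist σ τ := by gcongr
      _ ≤ 4 * h * (8 * κ ^ 2 * hammingDist σ τ * h) := by
          have : 0 ≤ κ ^ 2 * h ^ 2 * hammingDist σ τ := by positivity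
          linarith
      _ ≤ 4 * h * (8 * κ ^ 2 * hammingDist σ τ * (2 * h - hammingDist σ τ)) := by
          gcongr
          linarith
  close σ τ hστ := by
    have hhl' : (2 : ℝ) * h - 1 ≤ l := by
      have : (2 : ℝ) * h ≤ l := by exact_mod_cast hhl
      linarith
    rw [frobSq_rankOneMatrix_sub, Fintype.card_fin, hστ, Nat.cast_one, mul_one]
    calc n * (8 * κ ^ 2 * (2 * h - 1)) ≤ n * (8 * κ ^ 2 * l) := by gcongr
      _ ≤ a ^ 2 * m ^ 2 := hn
  card_large := by
    refine le_trans (Nat.mul_le_mul_left 64 (card_exists_half_lt_abs_le ha fun σ hσ u v => ?_))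
      (card_exists_lt_sq_sum_boolSign_mul_le (fun v i => U v (.inl i)) hm
        (by simpa using Nat.le_self_pow two_ne_zero m) one_pos
        (sum_sq_row_le_one (transpose_submatrix_mul_self_of_injective hU Sum.inl_injective)))
    simp only [mem_filter_univ, not_exists, not_lt, mul_one] at hσ
    linarith [sq_rankOneMatrix_conj_le t (κ := κ) hU hd hσ ht u v]

end RankOne

section Block

variable {α β γ : Type*}

/-- The symmetric matrix with off-diagonal blocks `κ B` and `κ Bᵀ`, where `B` is the sign matrix of
`σ` with each column repeated over the index set `γ`. The repetition lets a matrix of rank at most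
`2 |β|` fill a square of size comparable with `α`. -/
def blockMatrix (γ : Type*) (κ : ℝ) (σ : α × β → Bool) :
    Matrix (α ⊕ (β × γ)) (α ⊕ (β × γ)) ℝ :=
  let B : Matrix α (β × γ) ℝ := of fun i s => boolSign (σ (i, s.1))
  κ • fromBlocks 0 B Bᵀ 0

lemma isSymm_blockMatrix (κ : ℝ) (σ : α × β → Bool) : (blockMatrix γ κ σ).IsSymm := by
  simp [IsSymm, blockMatrix, transpose_smul, fromBlocks_transpose]

/-- The coefficient of the sign `σ x` in the entry `(u, v)` of `U * blockMatrix γ 1 σ * Uᵀ`. -/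
def blockCoeff {ι : Type*} [Fintype γ] (U : Matrix ι (α ⊕ (β × γ)) ℝ) (u v : ι) (x : α × β) : ℝ :=
  U u (.inl x.1) * ∑ j, U v (.inr (x.2, j)) + U v (.inl x.1) * ∑ j, U u (.inr (x.2, j))

variable [Fintype α] [Fintype β] [Fintype γ]

lemma rank_blockMatrix_le (κ : ℝ) (σ : α × β → Bool) :
    (blockMatrix γ κ σ).rank ≤ 2 * Fintype.card β := by
  classical
  let B : Matrix α β ℝ := of fun i q => boolSign (σ (i, q))
  let E : Matrix β (β × γ) ℝ := of fun q s => if q = s.1 then 1 else 0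
  have factored : blockMatrix γ κ σ = fromBlocks B 0 0 Eᵀ * (κ • fromBlocks 0 E Bᵀ 0) := by
    have repeated : (of fun i s => boolSign (σ (i, s.1)) : Matrix α (β × γ) ℝ) = B * E := by
      ext i s
      simp [B, E, mul_apply]
    rw [Matrix.mul_smul, fromBlocks_multiply, blockMatrix, repeated, transpose_mul]
    simp
  calc (blockMatrix γ κ σ).rank ≤ Fintype.card (β ⊕ β) := by
        rw [factored]
        exact (rank_mul_le_left _ _).trans (rank_le_card_width _)
    _ = 2 * Fintype.card β := by rw [Fintype.card_sum, two_mul]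

lemma frobSq_fromBlocks_zero_transpose_zero {δ ε : Type*} [Fintype δ] [Fintype ε]
    (B : Matrix δ ε ℝ) : frobSq (fromBlocks 0 B Bᵀ 0) = 2 * frobSq B := by
  rw [two_mul, ← congrArg (frobSq B + ·) (frobSq_transpose B)]
  simp [frobSq, Fintype.sum_sum_type]

lemma sum_sum_fst (f : α × β → ℝ) :
    ∑ i, ∑ s : β × γ, f (i, s.1) = Fintype.card γ * ∑ x, f x := by
  simp [Fintype.sum_prod_type, mul_sum]

lemma frobSq_blockMatrix (κ : ℝ) (σ : α × β → Bool) :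
    frobSq (blockMatrix γ κ σ) =
      2 * κ ^ 2 * (Fintype.card α * (Fintype.card β * Fintype.card γ)) := by
  rw [blockMatrix, frobSq_smul, frobSq_fromBlocks_zero_transpose_zero]
  simp only [frobSq, of_apply, sq (boolSign _), boolSign_mul_self, sum_const, card_univ,
    Fintype.card_prod, nsmul_eq_mul]
  push_cast
  ring

lemma frobSq_blockMatrix_sub (κ : ℝ) (σ τ : α × β → Bool) :
    frobSq (blockMatrix γ κ σ - blockMatrix γ κ τ) =
      8 * κ ^ 2 * Fintype.card γ * hammingDist σ τ := by
  rw [blockMatrix, blockMatrix, ← smul_sub, frobSq_smul, sub_eq_add_neg, fromBlocks_neg,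
    fromBlocks_add, neg_zero, neg_zero, add_zero, add_zero, ← transpose_neg, ← transpose_add,
    ← sub_eq_add_neg, frobSq_fromBlocks_zero_transpose_zero]
  simp only [frobSq, Matrix.sub_apply, of_apply]
  rw [sum_sum_fst (fun x => (boolSign (σ x) - boolSign (τ x)) ^ 2), sum_sq_boolSign_sub]
  ring

lemma mul_blockMatrix_mul_transpose_apply {ι : Type*} (U : Matrix ι (α ⊕ (β × γ)) ℝ)
    (σ : α × β → Bool) (u v : ι) :
    (U * blockMatrix γ κ σ * Uᵀ) u v = κ * ∑ x, boolSign (σ x) * blockCoeff U u v x := by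
  simp only [blockMatrix, Matrix.mul_smul, Matrix.smul_mul, Matrix.smul_apply, smul_eq_mul]
  congr 1
  simp only [mul_apply, Fintype.sum_sum_type, fromBlocks_apply₁₁, fromBlocks_apply₁₂,
    fromBlocks_apply₂₁, fromBlocks_apply₂₂, Matrix.zero_apply, of_apply, transpose_apply, mul_zero,
    sum_const_zero, zero_add, add_zero, blockCoeff, mul_add, sum_add_distrib,
    Fintype.sum_prod_type, mul_sum, sum_mul]
  rw [add_comm]
  congr 1
  · rw [sum_congr rfl fun q _ => sum_comm, sum_comm]
    exact sum_congr rfl fun i _ => sum_congr rfl fun q _ => sum_congr rfl fun j _ => by ring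
  · exact sum_congr rfl fun i _ => sum_congr rfl fun q _ => sum_congr rfl fun j _ => by ring

lemma sum_sq_sum_inr_le {ι : Type*} [Fintype ι] [DecidableEq α] [DecidableEq β] [DecidableEq γ]
    {U : Matrix ι (α ⊕ (β × γ)) ℝ} (hU : Uᵀ * U = 1) (hd : ∀ u, #{j | U u j ≠ 0} ≤ d) (u : ι) :
    ∑ q, (∑ j, U u (.inr (q, j))) ^ 2 ≤ d := by
  have card_le (q) : #{j | U u (.inr (q, j)) ≠ 0} ≤ d :=
    (card_le_card_of_injOn (fun j => .inr (q, j)) (fun j hj => by simpa using hj)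
      (fun j _ k _ h => by simpa using h)).trans (hd u)
  calc ∑ q, (∑ j, U u (.inr (q, j))) ^ 2 ≤ ∑ q, d * ∑ j, U u (.inr (q, j)) ^ 2 := by
        refine sum_le_sum fun q _ => ?_
        simpa using sq_sum_mul_le_card_support_mul (c := fun _ => 1) (by simp) (card_le q)
    _ = d * ∑ s, U u (.inr s) ^ 2 := by rw [← mul_sum, Fintype.sum_prod_type]
    _ ≤ d := mul_le_of_le_one_right d.cast_nonneg
        (sum_sq_row_le_one (transpose_submatrix_mul_self_of_injective hU Sum.inr_injective) u)

lemma sum_sq_blockCoeff_le {ι : Type*} [Fintype ι] [DecidableEq α] [DecidableEq β]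
    [DecidableEq γ] {U : Matrix ι (α ⊕ (β × γ)) ℝ} (hU : Uᵀ * U = 1)
    (hd : ∀ u, #{j | U u j ≠ 0} ≤ d) (u v : ι) :
    ∑ x, blockCoeff U u v x ^ 2 ≤ 4 * d := by
  have sum_sq_mul_le (u v) :
      ∑ x : α × β, (U u (.inl x.1) * ∑ j, U v (.inr (x.2, j))) ^ 2 ≤ d := by
    simp_rw [Fintype.sum_prod_type, mul_pow, ← mul_sum, ← sum_mul]
    exact (mul_le_of_le_one_left (sum_nonneg fun _ _ => sq_nonneg _)
      (sum_sq_row_le_one (transpose_submatrix_mul_self_of_injective hU Sum.inl_injective) u)).trans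
      (sum_sq_sum_inr_le hU hd v)
  calc ∑ x, blockCoeff U u v x ^ 2
      ≤ ∑ x : α × β, 2 * ((U u (.inl x.1) * ∑ j, U v (.inr (x.2, j))) ^ 2 +
          (U v (.inl x.1) * ∑ j, U u (.inr (x.2, j))) ^ 2) := sum_le_sum fun _ _ => add_sq_le
    _ ≤ 4 * d := by
        rw [← mul_sum, sum_add_distrib]
        linarith [sum_sq_mul_le u v, sum_sq_mul_le v u]

lemma card_exists_half_lt_abs_blockMatrix_conj_le [DecidableEq α] [DecidableEq β] [DecidableEq γ]
    {U : Matrix (Fin m) (α ⊕ (β × γ)) ℝ} (hU : Uᵀ * U = 1) (hd : ∀ u, #{j | U u j ≠ 0} ≤ d)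
    (hd0 : 0 < d) (ha : 0 ≤ a) (hm : 2 ≤ Real.log m)
    (hκ : 256 * κ ^ 2 * (d * Real.log m) ≤ a ^ 2) :
    64 * #{σ : α × β → Bool | ∃ u v, a / 2 < |(U * blockMatrix γ κ σ * Uᵀ) u v|} ≤
      2 ^ Fintype.card (α × β) := by
  refine le_trans (Nat.mul_le_mul_left 64 (card_exists_half_lt_abs_le ha fun σ hσ u v => ?_))
    (card_exists_lt_sq_sum_boolSign_mul_le (fun w : Fin m × Fin m => blockCoeff U w.1 w.2) hm
      (by simp [sq]) (v := 4 * d) (by positivity) fun w => sum_sq_blockCoeff_le hU hd w.1 w.2)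
  simp only [mem_filter_univ, not_exists, not_lt, Prod.forall] at hσ
  calc (U * blockMatrix γ κ σ * Uᵀ) u v ^ 2
      = κ ^ 2 * (∑ x, boolSign (σ x) * blockCoeff U u v x) ^ 2 := by
        rw [mul_blockMatrix_mul_transpose_apply, mul_pow]
    _ ≤ κ ^ 2 * (16 * (4 * d) * Real.log m) := by gcongr; exact hσ u v
    _ ≤ a ^ 2 / 4 := by linarith

lemma isAssouadFamily_blockMatrix {h p b : ℕ} {U : Matrix (Fin m) (Fin h ⊕ (Fin p × Fin b)) ℝ}
    (hU : Uᵀ * U = 1) (hd : ∀ u, #{j | U u j ≠ 0} ≤ d) (hd0 : 0 < d) (ha : 0 ≤ a)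
    (hm : 2 ≤ Real.log m) (hpr : 2 * p ≤ r) (hhl : 2 * h ≤ l) (hlh : l ≤ 3 * h)
    (hpb : p * b ≤ h) (hhpb : h ≤ 2 * (p * b))
    (hn : n * (8 * κ ^ 2 * b) ≤ a ^ 2 * m ^ 2) (hκ : 256 * κ ^ 2 * (d * Real.log m) ≤ a ^ 2) :
    IsAssouadFamily U n r a (κ ^ 2 * l ^ 2) (blockMatrix (Fin b) κ) where
  isSymm := isSymm_blockMatrix κ
  rank_le σ := (rank_blockMatrix_le κ σ).trans (by rwa [Fintype.card_fin])
  frobSq_le σ := by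
    have hpb' : (p * b : ℝ) ≤ h := by exact_mod_cast hpb
    have hhl' : (2 : ℝ) * h ≤ l := by exact_mod_cast hhl
    rw [frobSq_blockMatrix]
    simp only [Fintype.card_fin]
    calc 2 * κ ^ 2 * (h * (p * b)) ≤ 2 * κ ^ 2 * (h * h) := by gcongr
      _ ≤ κ ^ 2 * (2 * h) ^ 2 := by linarith [sq_nonneg (κ * h)]
      _ ≤ κ ^ 2 * l ^ 2 := by gcongr
  separated σ τ := by
    have hlh' : (l : ℝ) ≤ 3 * h := by exact_mod_cast hlh
    have hhpb' : (h : ℝ) ≤ 2 * (p * b) := by exact_mod_cast hhpb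
    rw [frobSq_blockMatrix_sub]
    simp only [Fintype.card_fin, Fintype.card_prod, Nat.cast_mul]
    calc κ ^ 2 * l ^ 2 * hammingDist σ τ ≤ κ ^ 2 * (3 * h) ^ 2 * hammingDist σ τ := by gcongr
      _ = 9 * κ ^ 2 * h * hammingDist σ τ * h := by ring
      _ ≤ 9 * κ ^ 2 * h * hammingDist σ τ * (2 * (p * b)) := by gcongr
      _ ≤ 4 * (h * p) * (8 * κ ^ 2 * b * hammingDist σ τ) := by
          have : 0 ≤ κ ^ 2 * h * p * b * hammingDist σ τ := by positivity
          linarith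
  close σ τ hστ := by
    rw [frobSq_blockMatrix_sub, hστ, Nat.cast_one, mul_one, Fintype.card_fin]
    exact hn
  card_large := card_exists_half_lt_abs_blockMatrix_conj_le hU hd hd0 ha hm hκ

end Block

end Families

/-! ### The bound at a fixed level -/

section Level

open Matrix

variable {m n r l : ℕ} {ρ a κ : ℝ} {lam : ℕ → ℝ} {φ : ℕ → Fin m → ℝ} [NeZero m]

lemma le_maximalRisk_of_level_one (hφ : OrthonormalFamily m φ) (hlam : 0 ≤ lam 1) (ha : 0 < a)
    (hr : 1 ≤ r) (hn : n * (4 * κ ^ 2) ≤ a ^ 2 * m ^ 2) (hρ : lam 1 * κ ^ 2 ≤ ρ ^ 2 * m ^ 2)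
    (hκ : 4 * κ ^ 2 ≤ a ^ 2) (Shat : (Fin n → Obs m) → Matrix (Fin m) (Fin m) ℝ) :
    ENNReal.ofReal (1 / 128) ≤
      maximalRisk r ρ a lam φ Shat (ENNReal.ofReal (κ ^ 2 / 512 / m ^ 2)) := by
  obtain ⟨U, hU, -, hW⟩ := exists_eigenframe (lam := lam) (l := 1) hφ (by simp)
    (Nat.one_le_iff_ne_zero.2 (NeZero.ne m)) Unit (by simp)
  exact (isAssouadFamily_signMatrix hU ha.le hr hn hκ).le_maximalRisk ha hU hW hlam hρ Shat

lemma le_maximalRisk_of_rank_one (hφ : OrthonormalFamily m φ)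
    (hmono : ∀ k ∈ Icc 1 l, lam k ≤ lam l) (hlam : 0 ≤ lam l) (ha : 0 < a) (hr : 1 ≤ r)
    (hm : 2 ≤ Real.log m) (hl : 2 ≤ l) (hlm : l ≤ m) (hn : n * (8 * κ ^ 2 * l) ≤ a ^ 2 * m ^ 2)
    (hρ : lam l * (κ ^ 2 * l ^ 2) ≤ ρ ^ 2 * m ^ 2)
    (hκ : 256 * κ ^ 2 * (sparsity m φ * Real.log m) ≤ a ^ 2)
    (Shat : (Fin n → Obs m) → Matrix (Fin m) (Fin m) ℝ) :
    ENNReal.ofReal (1 / 128) ≤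
      maximalRisk r ρ a lam φ Shat (ENNReal.ofReal (κ ^ 2 * l ^ 2 / 512 / m ^ 2)) := by
  obtain ⟨U, hU, hd, hW⟩ := exists_eigenframe hφ hmono hlm (Fin (l / 2) ⊕ Fin (l / 2))
    (by simp; omega)
  obtain ⟨t, ht⟩ := exists_forall_sq_sum_boolSign_mul_le (fun v i => U v (.inr i)) hm
    (by simpa using Nat.le_self_pow two_ne_zero m) one_pos
    (sum_sq_row_le_one (transpose_submatrix_mul_self_of_injective hU Sum.inr_injective))
  simp only [mul_one] at ht
  have : Nonempty (Fin (l / 2)) := ⟨⟨0, by omega⟩⟩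
  exact (isAssouadFamily_rankOneMatrix hU hd ht ha.le hm hr (by omega) (by omega) hn
    hκ).le_maximalRisk ha hU hW hlam hρ Shat

lemma le_two_mul_mul_div {h p : ℕ} (hp : 0 < p) (hph : p ≤ h) : h ≤ 2 * (p * (h / p)) := by
  have : p * 1 ≤ p * (h / p) := Nat.mul_le_mul_left p ((Nat.one_le_div_iff hp).2 hph)
  have := Nat.div_add_mod h p
  have := Nat.mod_lt h hp
  omega

lemma le_maximalRisk_of_two_le_rank (hφ : OrthonormalFamily m φ)
    (hmono : ∀ k ∈ Icc 1 l, lam k ≤ lam l) (hlam : 0 ≤ lam l) (ha : 0 < a) (hr : 2 ≤ r)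
    (hm : 2 ≤ Real.log m) (hl : 2 ≤ l) (hlm : l ≤ m)
    (hn : n * (24 * κ ^ 2 * l) ≤ a ^ 2 * m ^ 2 * (min r l : ℕ))
    (hρ : lam l * (κ ^ 2 * l ^ 2) ≤ ρ ^ 2 * m ^ 2)
    (hκ : 256 * κ ^ 2 * (sparsity m φ * Real.log m) ≤ a ^ 2)
    (Shat : (Fin n → Obs m) → Matrix (Fin m) (Fin m) ℝ) :
    ENNReal.ofReal (1 / 128) ≤
      maximalRisk r ρ a lam φ Shat (ENNReal.ofReal (κ ^ 2 * l ^ 2 / 512 / m ^ 2)) := by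
  set p := min r l / 2
  set b := l / 2 / p
  have hpb : p * b ≤ l / 2 := Nat.mul_div_le _ _
  have hlpb : l / 2 ≤ 2 * (p * b) := le_two_mul_mul_div (by omega) (by omega)
  obtain ⟨U, hU, hd, hW⟩ := exists_eigenframe hφ hmono hlm (Fin (l / 2) ⊕ (Fin p × Fin b))
    (by simp; omega)
  have close : n * (8 * κ ^ 2 * b) ≤ a ^ 2 * m ^ 2 := by
    have min_mul_le : ((min r l : ℕ) * b : ℝ) ≤ 3 * l := by
      have : min r l ≤ 3 * p := by omega
      have : min r l * b ≤ 3 * p * b := Nat.mul_le_mul_right b this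
      have : min r l * b ≤ 3 * l := by rw [mul_assoc] at this; omega
      exact_mod_cast this
    have l_pos : (0 : ℝ) < 3 * l := by positivity
    refine le_of_mul_le_mul_right ?_ l_pos
    calc n * (8 * κ ^ 2 * b) * (3 * l) = n * (24 * κ ^ 2 * l) * b := by ring
      _ ≤ a ^ 2 * m ^ 2 * (min r l : ℕ) * b := by gcongr
      _ = a ^ 2 * m ^ 2 * ((min r l : ℕ) * b) := by ring
      _ ≤ a ^ 2 * m ^ 2 * (3 * l) := by gcongr
  have : Nonempty (Fin (l / 2) × Fin p) := ⟨⟨0, by omega⟩, ⟨0, by omega⟩⟩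
  exact (isAssouadFamily_blockMatrix hU hd (sparsity_pos hφ) ha.le hm (by omega) (by omega)
    (by omega) hpb hlpb close hκ).le_maximalRisk ha hU hW hlam hρ Shat

lemma le_maximalRisk_of_level (hφ : OrthonormalFamily m φ)
    (hmono : ∀ k ∈ Icc 1 l, lam k ≤ lam l) (hlam : 0 ≤ lam l) (ha : 0 < a) (hr : 1 ≤ r)
    (hm : 2 ≤ Real.log m) (hl : 1 ≤ l) (hlm : l ≤ m)
    (hn : n * (256 * κ ^ 2 * l) ≤ a ^ 2 * m ^ 2 * (min r l : ℕ))
    (hρ : lam l * (κ ^ 2 * l ^ 2) ≤ ρ ^ 2 * m ^ 2)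
    (hκ : 256 * κ ^ 2 * (sparsity m φ * Real.log m) ≤ a ^ 2)
    (Shat : (Fin n → Obs m) → Matrix (Fin m) (Fin m) ℝ) :
    ENNReal.ofReal (1 / 128) ≤
      maximalRisk r ρ a lam φ Shat (ENNReal.ofReal (κ ^ 2 * l ^ 2 / 512 / m ^ 2)) := by
  have relax_n {c : ℝ} (hc : c ≤ 256) :
      n * (c * κ ^ 2 * l) ≤ a ^ 2 * m ^ 2 * (min r l : ℕ) := by
    refine le_trans ?_ hn
    gcongr
  obtain rfl | hl := hl.eq_or_lt
  · have one_le_mul : 1 ≤ sparsity m φ * Real.log m :=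
      one_le_mul_of_one_le_of_one_le (by exact_mod_cast sparsity_pos hφ) (by linarith)
    have hκ' : 4 * κ ^ 2 ≤ a ^ 2 := by
      nlinarith [mul_le_mul_of_nonneg_left one_le_mul (sq_nonneg κ), sq_nonneg κ]
    simp only [Nat.cast_one, one_pow, mul_one, min_eq_right hr] at relax_n hρ ⊢
    exact le_maximalRisk_of_level_one hφ hlam ha hr (relax_n (by norm_num)) hρ hκ' Shat
  obtain rfl | hr := hr.eq_or_lt
  · simp only [min_eq_left hl.le, Nat.cast_one, mul_one] at relax_n
    exact le_maximalRisk_of_rank_one hφ hmono hlam ha le_rfl hm hl hlm (relax_n (by norm_num)) hρ hκ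
      Shat
  · exact le_maximalRisk_of_two_le_rank hφ hmono hlam ha hr hm hl hlm (relax_n (by norm_num)) hρ hκ
      Shat

lemma le_maximalRisk_of_rate {δ : ℝ} (hφ : OrthonormalFamily m φ)
    (hmono : ∀ k ∈ Icc 1 l, lam k ≤ lam l) (hlam : 0 ≤ lam l) (ha : 0 < a) (hr : 1 ≤ r)
    (hm : 2 ≤ Real.log m) (hl : 1 ≤ l) (hlm : l ≤ m) (hδ : 0 ≤ δ)
    (le_var : δ * n ≤ a ^ 2 * (min r l : ℕ) * l) (le_smooth : lam l * δ ≤ ρ ^ 2)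
    (le_bounded : δ * (sparsity m φ * Real.log m) * m ^ 2 ≤ a ^ 2 * l ^ 2)
    (Shat : (Fin n → Obs m) → Matrix (Fin m) (Fin m) ℝ) :
    ENNReal.ofReal (1 / 128) ≤ maximalRisk r ρ a lam φ Shat (ENNReal.ofReal (δ / 2 ^ 17)) := by
  have l_pos : (0 : ℝ) < l := by exact_mod_cast hl
  have m_pos : (0 : ℝ) < m := Nat.cast_pos.2 (NeZero.pos m)
  obtain ⟨κ, hκ⟩ : ∃ κ : ℝ, 256 * κ ^ 2 * l ^ 2 = δ * m ^ 2 := by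
    refine ⟨√δ * m / (16 * l), ?_⟩
    rw [div_pow, mul_pow, Real.sq_sqrt hδ]
    field
  have rate_eq : δ / 2 ^ 17 = κ ^ 2 * l ^ 2 / 512 / m ^ 2 := by
    field_simp
    linarith
  rw [rate_eq]
  refine le_maximalRisk_of_level hφ hmono hlam ha hr hm hl hlm ?_ ?_ ?_ Shat
  · refine le_of_mul_le_mul_right ?_ l_pos
    calc n * (256 * κ ^ 2 * l) * l = n * (256 * κ ^ 2 * l ^ 2) := by ring
      _ = δ * n * m ^ 2 := by rw [hκ]; ring
      _ ≤ a ^ 2 * (min r l : ℕ) * l * m ^ 2 := by gcongr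
      _ = a ^ 2 * m ^ 2 * (min r l : ℕ) * l := by ring
  · calc lam l * (κ ^ 2 * l ^ 2) ≤ lam l * (256 * κ ^ 2 * l ^ 2) := by
          gcongr
          nlinarith [sq_nonneg κ]
      _ = lam l * δ * m ^ 2 := by rw [hκ]; ring
      _ ≤ ρ ^ 2 * m ^ 2 := by gcongr
  · refine le_of_mul_le_mul_right ?_ (pow_pos l_pos 2)
    calc 256 * κ ^ 2 * (sparsity m φ * Real.log m) * l ^ 2
        = 256 * κ ^ 2 * l ^ 2 * (sparsity m φ * Real.log m) := by ring
      _ = δ * (sparsity m φ * Real.log m) * m ^ 2 := by rw [hκ]; ring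
      _ ≤ a ^ 2 * l ^ 2 := le_bounded

end Level

section Rate

variable {m n r l0 d : ℕ} {ρ a : ℝ} {lam : ℕ → ℝ} {φ : ℕ → Fin m → ℝ}

lemma delta4_anti_level {l0' : ℕ} (h : l0 ≤ l0') :
    delta4 m n r l0' d ρ a lam ≤ delta4 m n r l0 d ρ a lam :=
  biSup_mono fun _ hl => Icc_subset_Icc_left h hl

lemma exists_delta4_eq_ofReal (hl0 : l0 ≤ m) (hlam : ∀ l ∈ Icc l0 m, 0 ≤ lam l) (hn : 0 < n)
    (hm : 0 < Real.log m) (hd : 0 < d) :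
    ∃ l ∈ Icc l0 m, ∃ δ : ℝ, 0 ≤ δ ∧ delta4 m n r l0 d ρ a lam = ENNReal.ofReal δ ∧
      δ * n ≤ a ^ 2 * (min r l : ℕ) * l ∧ lam l * δ ≤ ρ ^ 2 ∧
      δ * (d * Real.log m) * m ^ 2 ≤ a ^ 2 * l ^ 2 := by
  have hm0 : (0 : ℝ) < m := Nat.cast_pos.2 <| Nat.pos_of_ne_zero fun h => by simp [h] at hm
  obtain ⟨l, hl, hmax⟩ := exists_mem_eq_sup' (nonempty_Icc.2 hl0) fun l : ℕ =>
    min (ENNReal.ofReal (a ^ 2 * (min r l : ℝ) * (l : ℝ) / n))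
      (min (ENNReal.ofReal (ρ ^ 2) / ENNReal.ofReal (lam l))
        (ENNReal.ofReal ((a ^ 2 / (d * Real.log m)) * ((l : ℝ) ^ 2 / (m : ℝ) ^ 2))))
  rw [sup'_eq_sup, Finset.sup_eq_iSup] at hmax
  change delta4 m n r l0 d ρ a lam = _ at hmax
  have ne_top : delta4 m n r l0 d ρ a lam ≠ ⊤ :=
    ne_top_of_le_ne_top ENNReal.ofReal_ne_top (hmax.trans_le (min_le_left _ _))
  obtain ⟨δ, hδ, hδ_eq⟩ : ∃ δ : ℝ, 0 ≤ δ ∧ delta4 m n r l0 d ρ a lam = ENNReal.ofReal δ :=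
    ⟨_, ENNReal.toReal_nonneg, (ENNReal.ofReal_toReal ne_top).symm⟩
  obtain ⟨le_var, le_smooth, le_bounded⟩ := by
    simpa only [hδ_eq, le_min_iff] using hmax.le
  refine ⟨l, hl, δ, hδ, hδ_eq, ?_, ?_, ?_⟩
  · rw [ENNReal.ofReal_le_ofReal_iff (by positivity), le_div_iff₀ (by positivity)] at le_var
    simpa using le_var
  · obtain lam_eq | lam_pos := (hlam l hl).eq_or_lt
    · rw [← lam_eq, zero_mul]
      positivity
    · rwa [← ENNReal.ofReal_div_of_pos lam_pos, ENNReal.ofReal_le_ofReal_iff (by positivity),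
        le_div_iff₀' lam_pos] at le_smooth
  · rwa [ENNReal.ofReal_le_ofReal_iff (by positivity), div_mul_div_comm,
      le_div_iff₀ (by positivity), ← mul_assoc] at le_bounded

end Rate

theorem minimax_lower_bound_sparse_general {m n r : ℕ} {ρ a : ℝ} {lam : ℕ → ℝ}
    {φ : ℕ → Fin m → ℝ} (hn : 1 ≤ n) (hr : 1 ≤ r) (ha : 0 < a) (hm : 2 ≤ Real.log m)
    (hφ : OrthonormalFamily m φ) (hlam : ∀ k ∈ Icc 1 m, 0 ≤ lam k)
    (hmono : ∀ k l : ℕ, 1 ≤ k → k ≤ l → l ≤ m → lam k ≤ lam l)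
    (Shat : (Fin n → Obs m) → Matrix (Fin m) (Fin m) ℝ) :
    ENNReal.ofReal (1 / 128) ≤
      ⨆ (P : Measure (Obs m)) (_ : MemP m r ρ a lam φ P),
        (Measure.pi fun _ : Fin n => P)
          {ω | ENNReal.ofReal (1 / 2 ^ 17) * delta4 m n r 1 (sparsity m φ) ρ a lam ≤
            ENNReal.ofReal (l2PiSq (Shat ω - regKernel m P))} := by
  have : NeZero m := ⟨fun h => by norm_num [h] at hm⟩
  obtain ⟨l, hl, δ, hδ, hδ_eq, le_var, le_smooth, le_bounded⟩ :=
    exists_delta4_eq_ofReal (r := r) (ρ := ρ) (a := a) (Nat.one_le_iff_ne_zero.2 (NeZero.ne m))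
      hlam hn (two_pos.trans_le hm) (sparsity_pos hφ)
  obtain ⟨hl1, hlm⟩ := mem_Icc.1 hl
  have rate_eq : ENNReal.ofReal (1 / 2 ^ 17) * delta4 m n r 1 (sparsity m φ) ρ a lam =
      ENNReal.ofReal (δ / 2 ^ 17) := by
    rw [hδ_eq, ← ENNReal.ofReal_mul (by positivity), one_div_mul_eq_div]
  rw [rate_eq]
  exact le_maximalRisk_of_rate hφ
    (fun k hk => hmono k l (mem_Icc.1 hk).1 (mem_Icc.1 hk).2 hlm)
    (hlam l hl) ha hr hm hl1 hlm hδ le_var le_smooth le_bounded Shat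

/-- **Theorem 3 (minimax lower bound, sparse case).** -/
theorem minimax_lower_bound_sparse (c : ℝ) (hc : 1 ≤ c) :
    ∃ c₁ > (0 : ℝ), ∃ c₂ > (0 : ℝ),
      ∀ (m n r k0 : ℕ) (ρ a : ℝ) (lam : ℕ → ℝ) (φ : ℕ → Fin m → ℝ),
        1 ≤ m → 1 ≤ n → 1 ≤ r → r ≤ m → 0 < ρ → 0 < a →
        2 ≤ Real.log m →
        IsEigenData m c lam φ k0 →
        ∀ Shat : (Fin n → Obs m) → Matrix (Fin m) (Fin m) ℝ,
          (∀ u v : Fin m, Measurable fun ω => Shat ω u v) →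
          ENNReal.ofReal c₂ ≤
            ⨆ (P : Measure (Obs m)) (_ : MemP m r ρ a lam φ P),
              (Measure.pi fun _ : Fin n => P)
                {ω | ENNReal.ofReal c₁ *
                    delta4 m n r (min k0 32) (sparsity m φ) ρ a lam ≤
                  ENNReal.ofReal (l2PiSq (Shat ω - regKernel m P))} := by
  refine ⟨1 / 2 ^ 17, by norm_num, 1 / 128, by norm_num, ?_⟩
  intro m n r k0 ρ a lam φ _ hn hr _ _ ha hm hE Shat _
  exact (minimax_lower_bound_sparse_general hn hr ha hm hE.orth hE.nonneg hE.mono Shat).trans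
    (maximalRisk_anti Shat (mul_le_mul_right
      (delta4_anti_level (le_min hE.k0_mem.1 (by norm_num))) _))

end
end

section
/- Tail sum bounds for eigenvalues weighted by coherence: Let c_γ := (c+γ)/γ. For every S ∈ 𝒮_V with support L, every φ ∈ Ψ_{S,W} and every λ > 0: (i) ∑_{k : λ_k > λ} ‖P_L φ_k‖²/λ_k ≤ c_γ·φ(λ)/λ, and (ii) ∑_{k : λ_k > λ} 1/λ_k ≤ c_γ·F̄(λ)/λ. -/
open MeasureTheory Finset
open scoped ENNReal NNReal

noncomputable section

/-- Squared norm of the orthogonal projection of `x` onto the support (= range, for a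
symmetric matrix) of `S`. -/
def projSuppNormSq {m : ℕ} (S : Matrix (Fin m) (Fin m) ℝ) (x : Fin m → ℝ) : ℝ :=
  ‖(Submodule.orthogonalProjectionOnto (LinearMap.range (Matrix.toEuclideanLin S))
      ((EuclideanSpace.equiv (Fin m) ℝ).symm x) : EuclideanSpace ℝ (Fin m))‖ ^ 2

/-- The coherence function `φ(S;t) := ∑_{λ_j ≤ t} ‖P_L φ_j‖²`, `L = supp(S)`. -/
def cohFn {m : ℕ} (lam : ℕ → ℝ) (φ : ℕ → Fin m → ℝ) (S : Matrix (Fin m) (Fin m) ℝ)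
    (t : ℝ) : ℝ :=
  ∑ j ∈ (Finset.Icc 1 m).filter fun j => lam j ≤ t, projSuppNormSq S (φ j)

/-- The regularized coherence function
`φ̄(S;t) := sup_{0 < σ ≤ t} F̄(σ)·sup_{σ' ≥ σ} φ(S;σ')/F̄(σ')`. -/
def cohBar {m : ℕ} (lam : ℕ → ℝ) (φ : ℕ → Fin m → ℝ) (Fbar : ℝ → ℝ)
    (S : Matrix (Fin m) (Fin m) ℝ) (t : ℝ) : ℝ :=
  sSup ((fun σ => Fbar σ *
      sSup ((fun σ' => cohFn lam φ S σ' / Fbar σ') '' Set.Ici σ)) '' Set.Ioc 0 t)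

/-- `φ̄(S; ε̄⁻¹)`, with the convention `φ̄(S; +∞) := rank S` when `ε̄ = 0`. -/
def cohBarInv {m : ℕ} (lam : ℕ → ℝ) (φ : ℕ → Fin m → ℝ) (Fbar : ℝ → ℝ)
    (S : Matrix (Fin m) (Fin m) ℝ) (ebar : ℝ) : ℝ :=
  if ebar = 0 then (S.rank : ℝ) else cohBar lam φ Fbar S ebar⁻¹

/-- The nuclear norm of a symmetric matrix: the sum of absolute values of its
eigenvalues. -/
def nuclearNorm {m : ℕ} (S : Matrix (Fin m) (Fin m) ℝ) : ℝ :=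
  if h : S.IsHermitian then ∑ i, |h.eigenvalues i| else 0

/-- The spectral function `F(t) := #{j : λ_j ≤ t}`. -/
def specFn (m : ℕ) (lam : ℕ → ℝ) (t : ℝ) : ℕ :=
  ((Finset.Icc 1 m).filter fun j => lam j ≤ t).card

/-- `F̄` is a regularized majorant of the spectral function `F`: nondecreasing,
`F ≤ F̄`, `t ↦ F̄(t)/t` nonincreasing, `∫_t^∞ F̄(s)s⁻² ds ≤ γ⁻¹ F̄(t)/t`, and
`F̄(t) = m` for `t ≥ λ_m`. -/
structure IsSpectralMajorant (m : ℕ) (γ : ℝ) (lam : ℕ → ℝ) (Fbar : ℝ → ℝ) : Prop where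
  pos : ∀ t : ℝ, 0 < t → 0 < Fbar t
  mono : ∀ s t : ℝ, 0 < s → s ≤ t → Fbar s ≤ Fbar t
  majorant : ∀ t : ℝ, 0 < t → (specFn m lam t : ℝ) ≤ Fbar t
  ratio_anti : ∀ s t : ℝ, 0 < s → s ≤ t → Fbar t / t ≤ Fbar s / s
  integral : ∀ t : ℝ, 0 < t → (∫ s in Set.Ioi t, Fbar s / s ^ 2) ≤ γ⁻¹ * Fbar t / t
  top : ∀ t : ℝ, lam m ≤ t → Fbar t = m

/-- The quantity `t_{n,m} = t + 3 log(2 log₂ n + ½ log₂(λ_m/λ̃) + 2)`. -/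
def tnm (n m : ℕ) (t lamTilde : ℝ) (lam : ℕ → ℝ) : ℝ :=
  t + 3 * Real.log (2 * Real.logb 2 n + (1 / 2) * Real.logb 2 (lam m / lamTilde) + 2)

/-- `(μ, ψ)` is a spectral representation `S = ∑ᵢ μᵢ (ψᵢ ⊗ ψᵢ)` of the symmetric
kernel `S`, with `ψ₁,…,ψ_m` orthonormal. -/
def SpectralRep (m : ℕ) (S : Matrix (Fin m) (Fin m) ℝ) (μ : ℕ → ℝ)
    (ψ : ℕ → Fin m → ℝ) : Prop :=
  OrthonormalFamily m ψ ∧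
    S = Matrix.of fun u v => ∑ i ∈ Finset.Icc 1 m, μ i * ψ i u * ψ i v

/-- `‖P_L x‖²` for `L = supp(S) = l.s.{ψᵢ : μᵢ ≠ 0}`, computed from the spectral data. -/
def projNormSqData {m : ℕ} (μ : ℕ → ℝ) (ψ : ℕ → Fin m → ℝ) (x : Fin m → ℝ) : ℝ :=
  ∑ i ∈ (Finset.Icc 1 m).filter fun i => μ i ≠ 0, (∑ v, x v * ψ i v) ^ 2

/-- The coherence function `φ(S;t) := ∑_{λ_j ≤ t} ‖P_L φ_j‖²`, from the spectral data. -/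
def cohFnData {m : ℕ} (lam : ℕ → ℝ) (φ : ℕ → Fin m → ℝ) (μ : ℕ → ℝ)
    (ψ : ℕ → Fin m → ℝ) (t : ℝ) : ℝ :=
  ∑ j ∈ (Finset.Icc 1 m).filter fun j => lam j ≤ t, projNormSqData μ ψ (φ j)

/-- Membership of `φfun` in the class `Ψ_{S,W}`: `φfun` is nonnegative and nondecreasing
on `(0,∞)`, dominates the coherence function `φ(S;·)`, and `φfun/F̄` is nonincreasing. -/
def MemPsi {m : ℕ} (lam : ℕ → ℝ) (φ : ℕ → Fin m → ℝ) (Fbar : ℝ → ℝ) (μ : ℕ → ℝ)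
    (ψ : ℕ → Fin m → ℝ) (φfun : ℝ → ℝ) : Prop :=
  (∀ t : ℝ, 0 < t → 0 ≤ φfun t) ∧
  (∀ s t : ℝ, 0 < s → s ≤ t → φfun s ≤ φfun t) ∧
  (∀ t : ℝ, 0 < t → cohFnData lam φ μ ψ t ≤ φfun t) ∧
  (∀ s t : ℝ, 0 < s → s ≤ t → φfun t / Fbar t ≤ φfun s / Fbar s)

/-!
Writing `1 / λ_k = ∫_{λ_k}^∞ s⁻² ds` and exchanging sum and integral gives
`∑_{λ_k > t} a_k / λ_k = ∫_t^∞ A(s) s⁻² ds`, where `A(s)` is the total weight of the indices with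
`t < λ_k ≤ s`. If `A ≤ g` and `g / F̄` is nonincreasing, then `A(s) ≤ (g(t) / F̄(t)) F̄(s)`, so the
integral condition on `F̄` bounds the sum by `γ⁻¹ g(t) / t`. The coherence bound is the case
`a_k = ‖P_L φ_k‖²`, and the unweighted bound is the case `a_k = 1`, `g = F̄`. As `c ≥ 1`, the
constant `γ⁻¹` is at most `(c + γ) / γ`.
-/

section InverseSquare

variable {t : ℝ}

theorem rpow_neg_two_eq_inv_sq (s : ℝ) : s ^ (-2 : ℝ) = (s ^ 2)⁻¹ := by
  exact_mod_cast Real.rpow_intCast s (-2)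

theorem integrableOn_Ioi_inv_sq (ht : 0 < t) :
    IntegrableOn (fun s : ℝ => (s ^ 2)⁻¹) (Set.Ioi t) := by
  simpa only [rpow_neg_two_eq_inv_sq] using
    integrableOn_Ioi_rpow_of_lt (a := -2) (by norm_num) ht

theorem integral_Ioi_inv_sq (ht : 0 < t) : ∫ s in Set.Ioi t, (s ^ 2)⁻¹ = t⁻¹ := by
  simp only [← rpow_neg_two_eq_inv_sq]
  rw [integral_Ioi_rpow_of_lt (by norm_num) ht]
  norm_num [Real.rpow_neg_one]

theorem integrableOn_Ioi_div_sq_of_bounded {f : ℝ → ℝ} {M : ℝ} (ht : 0 < t)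
    (hf : AEStronglyMeasurable f (volume.restrict (Set.Ioi t)))
    (hM : ∀ s ∈ Set.Ioi t, ‖f s‖ ≤ M) :
    IntegrableOn (fun s => f s / s ^ 2) (Set.Ioi t) :=
  (integrableOn_Ioi_inv_sq ht).bdd_mul hf (ae_restrict_of_forall_mem measurableSet_Ioi hM)

end InverseSquare

section TailSum

variable {ι : Type*} {K : Finset ι} {a x : ι → ℝ} {t : ℝ}

theorem sum_filter_le_div_sq_eq_sum_indicator (K : Finset ι) (a x : ι → ℝ) (s : ℝ) :
    (∑ k ∈ K with x k ≤ s, a k) / s ^ 2 =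
      ∑ k ∈ K, a k * (Set.Ici (x k)).indicator (fun s : ℝ => (s ^ 2)⁻¹) s := by
  simp only [div_eq_mul_inv, sum_mul, sum_filter, Set.indicator_apply, Set.mem_Ici, ite_mul,
    zero_mul, mul_ite, mul_zero]

theorem integrable_indicator_Ici_inv_sq {y : ℝ} (hy : 0 < y) :
    Integrable ((Set.Ici y).indicator fun s : ℝ => (s ^ 2)⁻¹) :=
  (integrable_indicator_iff measurableSet_Ici).mpr <|
    (integrableOn_Ici_iff_integrableOn_Ioi).mpr (integrableOn_Ioi_inv_sq hy)

theorem setIntegral_Ioi_indicator_Ici_inv_sq {y : ℝ} (hy : 0 < y) (hty : t < y) :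
    ∫ s in Set.Ioi t, (Set.Ici y).indicator (fun s : ℝ => (s ^ 2)⁻¹) s = y⁻¹ := by
  rw [setIntegral_indicator measurableSet_Ici,
    Set.inter_eq_right.mpr (Set.Ici_subset_Ioi.mpr hty), integral_Ici_eq_integral_Ioi,
    integral_Ioi_inv_sq hy]

theorem integrable_sum_filter_le_div_sq (hx : ∀ k ∈ K, 0 < x k) :
    Integrable fun s : ℝ => (∑ k ∈ K with x k ≤ s, a k) / s ^ 2 := by
  simp only [sum_filter_le_div_sq_eq_sum_indicator]
  exact integrable_finsetSum _ fun k hk =>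
    (integrable_indicator_Ici_inv_sq (hx k hk)).const_mul (a k)

theorem sum_div_eq_integral_sum_filter_le_div_sq (hx : ∀ k ∈ K, 0 < x k)
    (htx : ∀ k ∈ K, t < x k) :
    ∑ k ∈ K, a k / x k = ∫ s in Set.Ioi t, (∑ k ∈ K with x k ≤ s, a k) / s ^ 2 := by
  simp only [sum_filter_le_div_sq_eq_sum_indicator]
  rw [integral_finsetSum _ fun k hk =>
    ((integrable_indicator_Ici_inv_sq (hx k hk)).const_mul (a k)).integrableOn]
  refine sum_congr rfl fun k hk => ?_
  rw [integral_const_mul, setIntegral_Ioi_indicator_Ici_inv_sq (hx k hk) (htx k hk),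
    div_eq_mul_inv]

theorem sum_filter_lt_div_le_integral {G : ℝ → ℝ} (ht : 0 ≤ t) (ha : ∀ k ∈ K, 0 ≤ a k)
    (hG : IntegrableOn (fun s => G s / s ^ 2) (Set.Ioi t))
    (haG : ∀ s, t < s → ∑ k ∈ K with x k ≤ s, a k ≤ G s) :
    ∑ k ∈ K with t < x k, a k / x k ≤ ∫ s in Set.Ioi t, G s / s ^ 2 := by
  have htx : ∀ k ∈ K.filter (t < x ·), t < x k := fun k hk => (mem_filter.mp hk).2
  have hx : ∀ k ∈ K.filter (t < x ·), 0 < x k := fun k hk => ht.trans_lt (htx k hk)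
  rw [sum_div_eq_integral_sum_filter_le_div_sq hx htx]
  refine setIntegral_mono_on (integrable_sum_filter_le_div_sq hx).integrableOn hG
    measurableSet_Ioi fun s hs => ?_
  gcongr
  calc ∑ k ∈ K.filter (t < x ·) with x k ≤ s, a k
      ≤ ∑ k ∈ K with x k ≤ s, a k :=
        sum_le_sum_of_subset_of_nonneg (filter_subset_filter _ (filter_subset _ _))
          fun k hk _ => ha k (mem_filter.mp hk).1
    _ ≤ G s := haG s hs

theorem sum_filter_lt_div_le_of_integral_le {C : ℝ} {F g : ℝ → ℝ} (ht : 0 < t)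
    (ha : ∀ k ∈ K, 0 ≤ a k) (hFpos : ∀ s, t ≤ s → 0 < F s)
    (hFint : IntegrableOn (fun s => F s / s ^ 2) (Set.Ioi t))
    (hFC : ∫ s in Set.Ioi t, F s / s ^ 2 ≤ C * F t / t)
    (hag : ∀ s, t ≤ s → ∑ k ∈ K with x k ≤ s, a k ≤ g s)
    (hgF : ∀ s, t ≤ s → g s / F s ≤ g t / F t) :
    ∑ k ∈ K with t < x k, a k / x k ≤ C * (g t / t) := by
  have hFt : 0 < F t := hFpos t le_rfl
  have hgt : 0 ≤ g t :=
    (sum_nonneg fun k hk => ha k (mem_filter.mp hk).1).trans (hag t le_rfl)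
  have hg_le : ∀ s, t < s → g s ≤ g t / F t * F s := fun s hs =>
    (div_le_iff₀ (hFpos s hs.le)).mp (hgF s hs.le)
  calc ∑ k ∈ K with t < x k, a k / x k
      ≤ ∫ s in Set.Ioi t, g t / F t * F s / s ^ 2 :=
        sum_filter_lt_div_le_integral ht.le ha
          (by simpa only [mul_div_assoc, IntegrableOn] using hFint.const_mul (g t / F t))
          fun s hs => (hag s hs.le).trans (hg_le s hs)
    _ = g t / F t * ∫ s in Set.Ioi t, F s / s ^ 2 := by
        simp only [mul_div_assoc, integral_const_mul]
    _ ≤ g t / F t * (C * F t / t) := by gcongr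
    _ = C * (g t / t) := by field_simp

end TailSum

namespace IsSpectralMajorant

variable {m : ℕ} {γ t : ℝ} {lam : ℕ → ℝ} {Fbar : ℝ → ℝ}

theorem le_natCast (hF : IsSpectralMajorant m γ lam Fbar) (ht : 0 < t) : Fbar t ≤ m :=
  (hF.mono t (max t (lam m)) ht (le_max_left _ _)).trans_eq (hF.top _ (le_max_right _ _))

theorem integrableOn_div_sq (hF : IsSpectralMajorant m γ lam Fbar) (ht : 0 < t) :
    IntegrableOn (fun s => Fbar s / s ^ 2) (Set.Ioi t) := by
  have hmono : MonotoneOn Fbar (Set.Ioi t) := fun r hr s _ hrs => hF.mono r s (ht.trans hr) hrs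
  refine integrableOn_Ioi_div_sq_of_bounded (M := m) ht
    (aemeasurable_restrict_of_monotoneOn measurableSet_Ioi hmono).aestronglyMeasurable
    fun s hs => ?_
  have hs0 : 0 < s := ht.trans hs
  rw [Real.norm_of_nonneg (hF.pos s hs0).le]
  exact hF.le_natCast hs0

theorem sum_filter_lt_div_le {ι : Type*} {K : Finset ι} {a x : ι → ℝ} {g : ℝ → ℝ}
    (hF : IsSpectralMajorant m γ lam Fbar) (ht : 0 < t) (ha : ∀ k ∈ K, 0 ≤ a k)
    (hag : ∀ s, t ≤ s → ∑ k ∈ K with x k ≤ s, a k ≤ g s)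
    (hgF : ∀ s, t ≤ s → g s / Fbar s ≤ g t / Fbar t) :
    ∑ k ∈ K with t < x k, a k / x k ≤ γ⁻¹ * (g t / t) :=
  sum_filter_lt_div_le_of_integral_le ht ha (fun s hs => hF.pos s (ht.trans_le hs))
    (hF.integrableOn_div_sq ht) (hF.integral t ht) hag hgF

theorem sum_filter_lt_inv_le (hF : IsSpectralMajorant m γ lam Fbar) (ht : 0 < t) :
    ∑ k ∈ Icc 1 m with t < lam k, (lam k)⁻¹ ≤ γ⁻¹ * (Fbar t / t) := by
  have hcount : ∀ s, t ≤ s → ∑ k ∈ Icc 1 m with lam k ≤ s, (1 : ℝ) ≤ Fbar s := fun s hs => by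
    simpa only [specFn, sum_const, nsmul_one] using hF.majorant s (ht.trans_le hs)
  have hratio : ∀ s, t ≤ s → Fbar s / Fbar s ≤ Fbar t / Fbar t := fun s hs => by
    rw [div_self (hF.pos s (ht.trans_le hs)).ne', div_self (hF.pos t ht).ne']
  simpa only [one_div] using
    hF.sum_filter_lt_div_le ht (fun _ _ => zero_le_one) hcount hratio

end IsSpectralMajorant

theorem projNormSqData_nonneg {m : ℕ} (μ : ℕ → ℝ) (ψ : ℕ → Fin m → ℝ) (v : Fin m → ℝ) :
    0 ≤ projNormSqData μ ψ v :=
  sum_nonneg fun _ _ => sq_nonneg _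

theorem tail_sum_bounds_general {m : ℕ} {γ : ℝ} {lam : ℕ → ℝ} {Fbar : ℝ → ℝ}
    (hF : IsSpectralMajorant m γ lam Fbar) {a : ℕ → ℝ} (ha : ∀ k ∈ Icc 1 m, 0 ≤ a k)
    {g : ℝ → ℝ} {t : ℝ} (ht : 0 < t)
    (hag : ∀ s, t ≤ s → ∑ k ∈ Icc 1 m with lam k ≤ s, a k ≤ g s)
    (hgF : ∀ s, t ≤ s → g s / Fbar s ≤ g t / Fbar t) :
    ∑ k ∈ Icc 1 m with t < lam k, a k / lam k ≤ γ⁻¹ * (g t / t) ∧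
      ∑ k ∈ Icc 1 m with t < lam k, (lam k)⁻¹ ≤ γ⁻¹ * (Fbar t / t) :=
  ⟨hF.sum_filter_lt_div_le ht ha hag hgF, hF.sum_filter_lt_inv_le ht⟩

theorem inv_le_add_div {c γ : ℝ} (hc : 1 ≤ c) (hγ : 0 < γ) : γ⁻¹ ≤ (c + γ) / γ := by
  rw [inv_eq_one_div]
  gcongr
  linarith

/-- **Lemma 1 (tail sums of eigenvalues weighted by coherence).** -/
theorem tail_sum_bounds (c γ : ℝ) (hc : 1 ≤ c) (hγ0 : 0 < γ) (hγ1 : γ < 1) :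
    ∀ (m k0 : ℕ) (lam : ℕ → ℝ) (φ : ℕ → Fin m → ℝ) (Fbar : ℝ → ℝ)
      (S : Matrix (Fin m) (Fin m) ℝ) (μ : ℕ → ℝ) (ψ : ℕ → Fin m → ℝ) (φfun : ℝ → ℝ),
      1 ≤ m →
      IsEigenData m c lam φ k0 →
      IsSpectralMajorant m γ lam Fbar →
      SpectralRep m S μ ψ →
      MemPsi lam φ Fbar μ ψ φfun →
      ∀ t : ℝ, 0 < t →
        (∑ k ∈ (Finset.Icc 1 m).filter fun k => t < lam k,
            projNormSqData μ ψ (φ k) / lam k) ≤ (c + γ) / γ * (φfun t / t) ∧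
        (∑ k ∈ (Finset.Icc 1 m).filter fun k => t < lam k, (lam k)⁻¹) ≤
          (c + γ) / γ * (Fbar t / t) := by
  intro m k0 lam φ Fbar S μ ψ φfun _ _ hF _ ⟨hφ_nonneg, _, hφ_ge, hφ_ratio⟩ t ht
  have hbounds := tail_sum_bounds_general hF (fun k _ => projNormSqData_nonneg μ ψ (φ k)) ht
    (fun s hs => hφ_ge s (ht.trans_le hs)) (fun s hs => hφ_ratio t s ht hs)
  exact hbounds.imp
    (·.trans <| mul_le_mul_of_nonneg_right (inv_le_add_div hc hγ0) <|
      div_nonneg (hφ_nonneg t ht) ht.le)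
    (·.trans <| mul_le_mul_of_nonneg_right (inv_le_add_div hc hγ0) <|
      div_nonneg (hF.pos t ht).le ht.le)

end
end

section
/- Spectral truncation approximation of smooth low-rank kernels: Let S_* ∈ 𝒮_V with rank(S_*) ≤ r and ‖W^{1/2}S_*‖_{L₂(Π²)} ≤ ρ, and let l ∈ {1,…,m−1} with λ_{l+1} > 0. Define S_{*,l} := ∑_{i,j=1}^l ⟨S_* φ_i, φ_j⟩·(φ_i ⊗ φ_j). Then: (i) ‖S_{*,l} − S_*‖²_{L₂(Π²)} ≤ 2ρ²/λ_{l+1}; (ii) rank(S_{*,l}) ≤ r; and (iii) ‖S_{*,l}‖_{L₂(Π²)} ≤ ‖S_*‖_{L₂(Π²)}. -/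
open MeasureTheory Finset
open scoped ENNReal NNReal

noncomputable section

/-- The spectral truncation `S_{*,l} := ∑_{i,j=1}^l ⟨S_* φ_i, φ_j⟩ (φ_i ⊗ φ_j)`. -/
def specTrunc {m : ℕ} (l : ℕ) (φ : ℕ → Fin m → ℝ)
    (S : Matrix (Fin m) (Fin m) ℝ) : Matrix (Fin m) (Fin m) ℝ :=
  Matrix.of fun u v =>
    ∑ i ∈ Finset.Icc 1 l, ∑ j ∈ Finset.Icc 1 l,
      (∑ w, S.mulVec (φ i) w * φ j w) * φ i u * φ j v

/-!
Let `P` be the orthogonal projection onto the span of `φ₁, …, φ_l`. Since `S` is symmetric, the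
truncation is the compression `P S P`, so its rank and its Hilbert–Schmidt norm are at most those of
`S`. The error splits into two orthogonal parts, `S - P S P = (1 - P) S + P S (1 - P)`, each of norm
at most `‖S (1 - P)‖`; and `‖S (1 - P)‖² = ∑_{k > l} ‖S φ_k‖²` is at most
`λ_{l+1}⁻¹ ∑_k λ_k ‖S φ_k‖²` because `λ_k ≥ λ_{l+1}` for all `k > l`.
-/

section Compression

open scoped Matrix Matrix.Norms.Frobenius

variable {𝕜 m n : Type*} [RCLike 𝕜] [Fintype m] [Fintype n]

theorem frobenius_norm_sq_eq_sum (A : Matrix m n 𝕜) : ‖A‖ ^ 2 = ∑ i, ∑ j, ‖A i j‖ ^ 2 := by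
  have sum_nonneg : 0 ≤ ∑ i, ∑ j, ‖A i j‖ ^ 2 := by positivity
  simp only [Matrix.frobenius_norm_def, Real.rpow_ofNat, ← Real.sqrt_eq_rpow,
    Real.sq_sqrt sum_nonneg]

theorem ofReal_frobenius_norm_sq_eq_trace (A : Matrix m n 𝕜) :
    ((‖A‖ ^ 2 : ℝ) : 𝕜) = (Aᴴ * A).trace := by
  rw [frobenius_norm_sq_eq_sum, Finset.sum_comm]
  simp [Matrix.trace, Matrix.mul_apply, RCLike.conj_mul]

variable {P : Matrix m m 𝕜}

theorem ofReal_frobenius_norm_sq_isStarProjection_mul (hP : IsStarProjection P)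
    (A : Matrix m n 𝕜) : ((‖P * A‖ ^ 2 : ℝ) : 𝕜) = (Aᴴ * P * A).trace := by
  rw [ofReal_frobenius_norm_sq_eq_trace, Matrix.conjTranspose_mul, Matrix.mul_assoc,
    ← Matrix.mul_assoc Pᴴ, hP.isSelfAdjoint.isHermitian.eq, hP.isIdempotentElem.eq,
    Matrix.mul_assoc]

theorem frobenius_norm_mul_isStarProjection (hP : IsStarProjection P) (A : Matrix n m 𝕜) :
    ‖A * P‖ = ‖P * Aᴴ‖ := by
  rw [← Matrix.frobenius_norm_conjTranspose, Matrix.conjTranspose_mul,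
    hP.isSelfAdjoint.isHermitian.eq]

theorem frobenius_norm_sq_mul_add_one_sub_mul [DecidableEq m] (hP : IsStarProjection P)
    (A : Matrix m n 𝕜) : ‖P * A‖ ^ 2 + ‖(1 - P) * A‖ ^ 2 = ‖A‖ ^ 2 := by
  apply RCLike.ofReal_injective (K := 𝕜)
  rw [RCLike.ofReal_add, ofReal_frobenius_norm_sq_isStarProjection_mul hP,
    ofReal_frobenius_norm_sq_isStarProjection_mul hP.one_sub, ofReal_frobenius_norm_sq_eq_trace,
    ← Matrix.trace_add, ← Matrix.add_mul, ← Matrix.mul_add, add_sub_cancel, Matrix.mul_one]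

theorem frobenius_norm_isStarProjection_mul_le (hP : IsStarProjection P) (A : Matrix m n 𝕜) :
    ‖P * A‖ ≤ ‖A‖ := by
  classical
  have pythagoras := frobenius_norm_sq_mul_add_one_sub_mul hP A
  exact (sq_le_sq₀ (norm_nonneg _) (norm_nonneg _)).1 (by linarith [sq_nonneg ‖(1 - P) * A‖])

theorem frobenius_norm_compression_le (hP : IsStarProjection P) (A : Matrix m m 𝕜) :
    ‖P * A * P‖ ≤ ‖A‖ :=
  calc ‖P * A * P‖ = ‖P * (P * A)ᴴ‖ := frobenius_norm_mul_isStarProjection hP _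
    _ ≤ ‖(P * A)ᴴ‖ := frobenius_norm_isStarProjection_mul_le hP _
    _ = ‖P * A‖ := Matrix.frobenius_norm_conjTranspose _
    _ ≤ ‖A‖ := frobenius_norm_isStarProjection_mul_le hP A

variable [DecidableEq m]

theorem frobenius_norm_sq_compression_sub_le (hP : IsStarProjection P) (A : Matrix m m 𝕜) :
    ‖P * A * P - A‖ ^ 2 ≤ ‖A * (1 - P)‖ ^ 2 + ‖(1 - P) * A‖ ^ 2 := by
  have range_part : P * (P * A * P - A) = -(P * (A * (1 - P))) := by
    simp only [mul_sub, ← mul_assoc, hP.isIdempotentElem.eq, mul_one, neg_sub]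
  have kernel_part : (1 - P) * (P * A * P - A) = -((1 - P) * A) := by
    simp only [mul_sub, ← mul_assoc, hP.one_sub_mul_self, zero_mul, zero_sub]
  rw [← frobenius_norm_sq_mul_add_one_sub_mul hP, range_part, kernel_part, norm_neg, norm_neg]
  gcongr
  exact frobenius_norm_isStarProjection_mul_le hP _

theorem frobenius_norm_sq_compression_sub_le_of_isHermitian (hP : IsStarProjection P)
    {A : Matrix m m 𝕜} (hA : A.IsHermitian) :
    ‖P * A * P - A‖ ^ 2 ≤ 2 * ‖A * (1 - P)‖ ^ 2 := by
  have norm_eq : ‖(1 - P) * A‖ = ‖A * (1 - P)‖ := by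
    rw [frobenius_norm_mul_isStarProjection hP.one_sub, hA.eq]
  simpa only [norm_eq, ← two_mul] using frobenius_norm_sq_compression_sub_le hP A

end Compression

section SpectralProjection

open scoped Matrix Matrix.Norms.Frobenius

variable {𝕜 ι m n : Type*} [RCLike 𝕜] [Fintype ι] [Fintype m] [Fintype n]

/-- The matrix of the orthogonal projection onto the span of the vectors `b i`, `i ∈ s`, of an
orthonormal basis `b`, written as the sum of the rank-one projections `b i ⊗ conj (b i)`. -/
def spectralProj (b : OrthonormalBasis ι 𝕜 (EuclideanSpace 𝕜 n)) (s : Finset ι) : Matrix n n 𝕜 :=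
  ∑ i ∈ s, Matrix.vecMulVec (b i) (star (b i))

variable (b : OrthonormalBasis ι 𝕜 (EuclideanSpace 𝕜 n)) (s : Finset ι)

theorem isStarProjection_spectralProj : IsStarProjection (spectralProj b s) where
  isIdempotentElem := by
    classical
    have dotProduct_basis (i j : ι) : star (b i) ⬝ᵥ b j = if i = j then (1 : 𝕜) else 0 := by
      rw [← orthonormal_iff_ite.1 b.orthonormal i j, EuclideanSpace.inner_eq_star_dotProduct,
        dotProduct_comm]
    simp only [IsIdempotentElem, spectralProj, Finset.sum_mul_sum, Matrix.vecMulVec_mul_vecMulVec,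
      dotProduct_basis, ite_smul, one_smul, zero_smul]
    refine Finset.sum_congr rfl fun i hi => ?_
    rw [Finset.sum_eq_single_of_mem i hi fun j _ hji => by
      rw [if_neg hji.symm, Matrix.vecMulVec_zero], if_pos rfl]
  isSelfAdjoint := by
    simp [IsSelfAdjoint, spectralProj, Matrix.star_eq_conjTranspose,
      Matrix.conjTranspose_vecMulVec]

theorem frobenius_norm_sq_mul_spectralProj (A : Matrix m n 𝕜) :
    ‖A * spectralProj b s‖ ^ 2 = ∑ i ∈ s, ‖WithLp.toLp 2 (A *ᵥ b i)‖ ^ 2 := by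
  have hP := isStarProjection_spectralProj b s
  have gram : A * spectralProj b s * Aᴴ =
      ∑ i ∈ s, Matrix.vecMulVec (A *ᵥ b i) (star (A *ᵥ b i)) := by
    simp only [spectralProj, Matrix.sum_mul, Matrix.mul_sum, Matrix.vecMulVec_mul,
      Matrix.mul_vecMulVec, Matrix.star_mulVec]
  apply RCLike.ofReal_injective (K := 𝕜)
  rw [frobenius_norm_mul_isStarProjection hP, ofReal_frobenius_norm_sq_isStarProjection_mul hP,
    Matrix.conjTranspose_conjTranspose, gram, Matrix.trace_sum, RCLike.ofReal_sum]
  refine Finset.sum_congr rfl fun i _ => ?_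
  rw [Matrix.trace_vecMulVec, RCLike.ofReal_pow, ← inner_self_eq_norm_sq_to_K (𝕜 := 𝕜),
    EuclideanSpace.inner_toLp_toLp]

variable [DecidableEq n]

theorem spectralProj_univ : spectralProj b Finset.univ = 1 := by
  simp only [spectralProj, ← InnerProductSpace.symm_toEuclideanLin_rankOne]
  rw [← map_sum, LinearEquiv.symm_apply_eq, ← ContinuousLinearMap.toLinearMap_sum,
    b.sum_rankOne_eq_id, Matrix.toEuclideanLin, Matrix.toLpLin_one]
  rfl

theorem one_sub_spectralProj [DecidableEq ι] : 1 - spectralProj b s = spectralProj b sᶜ := by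
  rw [← spectralProj_univ b, sub_eq_iff_eq_add']
  exact (Finset.sum_add_sum_compl s _).symm

theorem mul_frobenius_norm_sq_mul_one_sub_spectralProj_le {w : ι → ℝ} {c : ℝ}
    (hw : ∀ i ∈ s, 0 ≤ w i) (hc : ∀ i ∉ s, c ≤ w i) (A : Matrix m n 𝕜) :
    c * ‖A * (1 - spectralProj b s)‖ ^ 2 ≤ ∑ i, w i * ‖WithLp.toLp 2 (A *ᵥ b i)‖ ^ 2 := by
  classical
  rw [one_sub_spectralProj, frobenius_norm_sq_mul_spectralProj, Finset.mul_sum,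
    ← Finset.sum_add_sum_compl s]
  refine le_add_of_nonneg_of_le
    (Finset.sum_nonneg fun i hi => mul_nonneg (hw i hi) (sq_nonneg _))
    (Finset.sum_le_sum fun i hi => ?_)
  gcongr
  exact hc i (Finset.mem_compl.1 hi)

theorem spectral_truncation_approx_general {w : ι → ℝ} {c : ℝ} (hw : ∀ i ∈ s, 0 ≤ w i)
    (hc₀ : 0 ≤ c) (hc : ∀ i ∉ s, c ≤ w i) {A : Matrix n n 𝕜} (hA : A.IsHermitian) :
    c * ‖spectralProj b s * A * spectralProj b s - A‖ ^ 2 ≤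
        2 * ∑ i, w i * ‖WithLp.toLp 2 (A *ᵥ b i)‖ ^ 2 ∧
      (spectralProj b s * A * spectralProj b s).rank ≤ A.rank ∧
      ‖spectralProj b s * A * spectralProj b s‖ ≤ ‖A‖ := by
  have hP := isStarProjection_spectralProj b s
  refine ⟨?_, (Matrix.rank_mul_le_left _ _).trans (Matrix.rank_mul_le_right _ _),
    frobenius_norm_compression_le hP A⟩
  have tail_le := mul_frobenius_norm_sq_mul_one_sub_spectralProj_le b s hw hc A
  have error_le := frobenius_norm_sq_compression_sub_le_of_isHermitian hP hA
  calc c * ‖spectralProj b s * A * spectralProj b s - A‖ ^ 2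
      ≤ c * (2 * ‖A * (1 - spectralProj b s)‖ ^ 2) := by gcongr
    _ = 2 * (c * ‖A * (1 - spectralProj b s)‖ ^ 2) := by ring
    _ ≤ 2 * ∑ i, w i * ‖WithLp.toLp 2 (A *ᵥ b i)‖ ^ 2 := by gcongr

end SpectralProjection

section Kernel

open scoped Matrix.Norms.Frobenius

variable {m : ℕ} {φ : ℕ → Fin m → ℝ}

theorem l2PiSq_eq_frobenius_norm_sq_div (S : Matrix (Fin m) (Fin m) ℝ) :
    l2PiSq S = ‖S‖ ^ 2 / (m : ℝ) ^ 2 := by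
  simp only [l2PiSq, hsNormSq, frobenius_norm_sq_eq_sum, Real.norm_eq_abs, sq_abs]

theorem l2PiSq_le_l2PiSq_of_norm_le {S T : Matrix (Fin m) (Fin m) ℝ} (h : ‖S‖ ≤ ‖T‖) :
    l2PiSq S ≤ l2PiSq T := by
  simp only [l2PiSq_eq_frobenius_norm_sq_div]
  gcongr

theorem OrthonormalFamily.orthonormal (hφ : OrthonormalFamily m φ) :
    Orthonormal ℝ fun i : Finset.Icc 1 m => WithLp.toLp 2 (φ i) := by
  rw [orthonormal_iff_ite]
  rintro ⟨i, hi⟩ ⟨j, hj⟩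
  rw [EuclideanSpace.inner_toLp_toLp, star_trivial, dotProduct_comm]
  exact (hφ i hi j hj).trans (by simp only [Subtype.mk.injEq])

/-- The orthonormal basis of `ℝ^V` formed by the eigenfunctions `φ₁, …, φ_m`; its index type is
`Icc 1 m`, so that the paper's numbering is kept. -/
def OrthonormalFamily.orthonormalBasis (hφ : OrthonormalFamily m φ) :
    OrthonormalBasis (Finset.Icc 1 m) ℝ (EuclideanSpace ℝ (Fin m)) :=
  .mk hφ.orthonormal
    (hφ.orthonormal.linearIndependent.span_eq_top_of_card_eq_finrank' (by simp)).ge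

theorem OrthonormalFamily.orthonormalBasis_apply (hφ : OrthonormalFamily m φ)
    (i : Finset.Icc 1 m) : hφ.orthonormalBasis i = WithLp.toLp 2 (φ i) := by
  rw [orthonormalBasis, OrthonormalBasis.coe_mk]

theorem sobolevHSSq_eq_sum_orthonormalBasis (hφ : OrthonormalFamily m φ) (lam : ℕ → ℝ)
    (S : Matrix (Fin m) (Fin m) ℝ) :
    sobolevHSSq lam φ S =
      ∑ i : Finset.Icc 1 m, lam i * ‖WithLp.toLp 2 (S.mulVec (hφ.orthonormalBasis i))‖ ^ 2 := by
  simp only [sobolevHSSq, hφ.orthonormalBasis_apply, EuclideanSpace.real_norm_sq_eq]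
  exact (Finset.sum_coe_sort _ _).symm

theorem spectralProj_orthonormalBasis (hφ : OrthonormalFamily m φ) {l : ℕ} (hl : l ≤ m) :
    spectralProj hφ.orthonormalBasis ((Finset.Icc 1 l).subtype (· ∈ Finset.Icc 1 m)) =
      ∑ i ∈ Finset.Icc 1 l, Matrix.vecMulVec (φ i) (φ i) := by
  simp only [spectralProj, hφ.orthonormalBasis_apply, star_trivial]
  exact Finset.sum_subtype_of_mem (fun i => Matrix.vecMulVec (φ i) (φ i)) fun i hi =>
    Finset.Icc_subset_Icc_right hl hi

theorem specTrunc_eq_compression (l : ℕ) {S : Matrix (Fin m) (Fin m) ℝ} (hS : S.IsSymm) :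
    specTrunc l φ S = (∑ i ∈ Finset.Icc 1 l, Matrix.vecMulVec (φ i) (φ i)) * S *
      ∑ i ∈ Finset.Icc 1 l, Matrix.vecMulVec (φ i) (φ i) := by
  ext u v
  simp only [specTrunc, Matrix.of_apply, Matrix.sum_mul, Matrix.mul_sum, Matrix.sum_apply,
    Matrix.vecMulVec_mul, Matrix.vecMul_vecMulVec, Matrix.vecMulVec_apply,
    ← Matrix.mulVec_transpose S, hS.eq, Pi.smul_apply, smul_eq_mul]
  rw [Finset.sum_comm]
  refine Finset.sum_congr rfl fun i _ => Finset.sum_congr rfl fun j _ => ?_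
  rw [dotProduct]
  ring

end Kernel

/-- **Spectral truncation approximation of smooth low-rank kernels.** -/
theorem spectral_truncation_approx :
    ∀ (m r l : ℕ) (ρ : ℝ) (lam : ℕ → ℝ) (φ : ℕ → Fin m → ℝ)
      (S : Matrix (Fin m) (Fin m) ℝ),
      1 ≤ m → 1 ≤ l → l ≤ m - 1 → 0 ≤ ρ →
      OrthonormalFamily m φ →
      (∀ k ∈ Finset.Icc 1 m, 0 ≤ lam k) →
      (∀ k k' : ℕ, 1 ≤ k → k ≤ k' → k' ≤ m → lam k ≤ lam k') →
      0 < lam (l + 1) →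
      S.IsSymm → S.rank ≤ r →
      sobolevHSSq lam φ S ≤ ρ ^ 2 * (m : ℝ) ^ 2 →
      l2PiSq (specTrunc l φ S - S) ≤ 2 * ρ ^ 2 / lam (l + 1) ∧
        (specTrunc l φ S).rank ≤ r ∧
        l2PiSq (specTrunc l φ S) ≤ l2PiSq S := by
  intro m r l ρ lam φ S hm _ hlm _ hφ hlam hmono hpos hS hrank hsob
  have hl : l ≤ m := by omega
  have succ_le (i : Finset.Icc 1 m) (hi : i ∉ (Finset.Icc 1 l).subtype (· ∈ Finset.Icc 1 m)) :
      l + 1 ≤ i := by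
    have one_le := (Finset.mem_Icc.1 i.2).1
    rw [Finset.mem_subtype, Finset.mem_Icc] at hi
    omega
  obtain ⟨error_le, rank_le, norm_le⟩ :=
    spectral_truncation_approx_general hφ.orthonormalBasis
      ((Finset.Icc 1 l).subtype (· ∈ Finset.Icc 1 m)) (w := fun i => lam i) (c := lam (l + 1))
      (fun i _ => hlam i i.2) hpos.le
      (fun i hi => hmono _ _ (by omega) (succ_le i hi) (Finset.mem_Icc.1 i.2).2)
      (Matrix.isHermitian_iff_isSymm.2 hS)
  simp only [← sobolevHSSq_eq_sum_orthonormalBasis, spectralProj_orthonormalBasis hφ hl,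
    ← specTrunc_eq_compression l hS] at error_le rank_le norm_le
  refine ⟨?_, rank_le.trans hrank, l2PiSq_le_l2PiSq_of_norm_le norm_le⟩
  rw [l2PiSq_eq_frobenius_norm_sq_div, div_le_div_iff₀ (by positivity) hpos]
  linarith

end
end
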